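/- Let n and k be integers with 1 ≤ k ≤ n−1. A tree with boundary G has the Faber-Krahn property in the class T^{(n,k)} of all trees with boundary with n vertices and k interior vertices if and only if G is a comet, i.e. the tree consisting of a path v₁,…,v_k of k interior vertices in which v_k is additionally adjacent to n−k−1 boundary vertices and v₁ is additionally adjacent to one boundary vertex. Moreover G is then uniquely determined up to isomorphism. -/

import Mathlib

/-!
The comet minimises the first Dirichlet eigenvalue among trees with `n` vertices and `k` interior
vertices, because a ground state of any such tree can be rearranged on the comet without raising
its energy.

Let `f ≥ 0` be a ground state of a tree `G` in the class (`exists_ground`), and let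
`0 = a 0 ≤ a 1 ≤ … ≤ a k` be its sorted interior values, with gaps `δ p = a (p + 1) - a p`
(`exists_ranking`). An edge joining the ranks `i < j` contributes
`(δ i + … + δ (j - 1)) ^ 2`, which is at least the sum of the squares of these gaps plus twice the
products of consecutive ones (`gapBound_le`). Summed over all edges, `δ p ^ 2` is counted once for
each edge crossing the gap `p`, and `2 * δ p * δ (p + 1)` once for each edge crossing both gaps. As a
set `S` of vertices of a tree spans at most `|S| - 1` edges while interior vertices have degree at
least `2`, each gap is crossed at least twice and two consecutive gaps are crossed together at least
once (`crossOne_ge`, `crossTwo_ge`); the gap `0` is crossed by all `n - k` boundary edges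
(`crossOne_zero`). The resulting lower bound is exactly the energy of the spiral rearrangement that
puts the ranks `1, 2, 3, 4, …` at the positions `k, 1, k - 1, 2, …` of the comet
(`comet_energy_gaps`). The norm does not change, so `λ(comet) ≤ λ(G)`.

If equality holds, the rearranged function is a ground state of the comet. If `n ≥ k + 3`, the
eigenvalue equation on the comet makes all gaps positive (`comet_gaps`). Equality of the energies
then forces all edges of `G` to join ranks at distance at most `2` and every two consecutive gaps to
be crossed by one edge only (`energy_compare`). These conditions determine the tree
(`iso_of_ranking`). If `n = k + 2`, the degree sum shows that `G` is a path (`path_case`), which is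
the comet.
-/

/-!
Common definitions for Faber-Krahn type inequalities for trees
(Bıyıkoğlu–Leydold, "Faber-Krahn Type Inequalities for Trees").

A *tree (graph) with boundary* is a finite simple connected graph in which
boundary vertices are exactly the vertices of degree 1 and interior vertices
are the vertices of degree ≥ 2; both sets are required to be nonempty.
The Dirichlet operator is the Laplacian restricted to functions vanishing on
the boundary; `dirichletLambda` is its smallest eigenvalue.
-/

open Finset
open scoped Classical

noncomputable section

namespace FK

variable {V : Type*} [Fintype V] [DecidableEq V]

/-- A vertex is a boundary vertex iff it has degree `1`. -/
def IsBoundary (G : SimpleGraph V) (v : V) : Prop := G.degree v = 1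

/-- A vertex is an interior vertex iff it has degree at least `2`. -/
def IsInterior (G : SimpleGraph V) (v : V) : Prop := 2 ≤ G.degree v

/-- A tree with boundary: a tree with at least one interior and
one boundary vertex. -/
def IsTreeWithBoundary (G : SimpleGraph V) : Prop :=
  G.IsTree ∧ (∃ v, IsInterior G v) ∧ (∃ v, IsBoundary G v)

/-- A connected graph with boundary: every vertex is either a boundary vertex
(degree 1) or an interior vertex (degree ≥ 2), both kinds occur, and no edge
joins two boundary vertices. -/
def IsGraphWithBoundary (G : SimpleGraph V) : Prop :=
  G.Connected ∧ (∀ v, IsBoundary G v ∨ IsInterior G v) ∧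
    (∃ v, IsInterior G v) ∧ (∃ v, IsBoundary G v) ∧
    (∀ v w, G.Adj v w → IsBoundary G v → ¬ IsBoundary G w)

/-- The finset of interior vertices. -/
def interiorFinset (G : SimpleGraph V) : Finset V := univ.filter (fun v => IsInterior G v)

/-- The finset of boundary vertices. -/
def boundaryFinset (G : SimpleGraph V) : Finset V := univ.filter (fun v => IsBoundary G v)

/-- The degree sequence of `G`, as a multiset. -/
def degreeMultiset (G : SimpleGraph V) : Multiset ℕ := Finset.univ.val.map (fun v => G.degree v)

/-- The graph Laplacian `Δ = D - A` applied to a function `f : V → ℝ`. -/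
def lapApply (G : SimpleGraph V) (f : V → ℝ) (v : V) : ℝ :=
  (G.degree v : ℝ) * f v - ∑ w ∈ G.neighborFinset v, f w

/-- `f` (vanishing on the boundary, nonzero) is an eigenfunction of the
Dirichlet operator `Δ₀` with eigenvalue `μ`: the eigenvalue equation holds at
every interior vertex. -/
def IsDirichletEigenpair (G : SimpleGraph V) (μ : ℝ) (f : V → ℝ) : Prop :=
  f ≠ 0 ∧ (∀ v, IsBoundary G v → f v = 0) ∧
    ∀ v, IsInterior G v → lapApply G f v = μ * f v

/-- The first (smallest) Dirichlet eigenvalue `λ(G)`. -/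
def dirichletLambda (G : SimpleGraph V) : ℝ :=
  sInf {μ : ℝ | ∃ f : V → ℝ, IsDirichletEigenpair G μ f}

/-- The quadratic form `⟨Δ f, f⟩ = Σ_{(u,v)∈E} (f u - f v)²` of the Laplacian
(each edge counted once). -/
def quadForm (G : SimpleGraph V) (f : V → ℝ) : ℝ :=
  (∑ v, ∑ w ∈ G.neighborFinset v, (f v - f w) ^ 2) / 2

/-- The Rayleigh quotient `R_G(f)`. -/
def rayleigh (G : SimpleGraph V) (f : V → ℝ) : ℝ :=
  quadForm G f / ∑ v, f v ^ 2

/-- `w` is a child of `v` in the tree `G` rooted at `v₀`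
(heights are distances from the root `v₀`). -/
def IsChild (G : SimpleGraph V) (v₀ v w : V) : Prop :=
  G.Adj v w ∧ G.dist v₀ w = G.dist v₀ v + 1

/-- A spiral-like ordering (SLO-ordering) of the vertices of the tree `G`
rooted at `v₀`: a (strict) well-ordering `lt` satisfying (S1)-(S3). -/
def IsSLOOrdering (G : SimpleGraph V) (v₀ : V) (lt : V → V → Prop) : Prop :=
  IsStrictTotalOrder V lt ∧
  (∀ v w, lt v w → G.dist v₀ v ≤ G.dist v₀ w) ∧
  (∀ v₁ v₂ w₁ w₂, lt v₁ v₂ → IsChild G v₀ v₁ w₁ → IsChild G v₀ v₂ w₂ → lt w₁ w₂) ∧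
  (∀ v w, lt v w → IsBoundary G v → IsBoundary G w)

/-- A spiral-like ordering with increasing degrees (SLO*-ordering):
additionally (S4). -/
def IsSLOStarOrdering (G : SimpleGraph V) (v₀ : V) (lt : V → V → Prop) : Prop :=
  IsSLOOrdering G v₀ lt ∧
  ∀ v w, lt v w → IsInterior G v → IsInterior G w → G.degree v ≤ G.degree w

/-- An SLO-tree: a tree with boundary admitting an SLO-ordering. -/
def IsSLOTree (G : SimpleGraph V) : Prop :=
  IsTreeWithBoundary G ∧ ∃ (v₀ : V) (lt : V → V → Prop), IsSLOOrdering G v₀ lt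

/-- An SLO*-tree: a tree with boundary admitting an SLO*-ordering. -/
def IsSLOStarTree (G : SimpleGraph V) : Prop :=
  IsTreeWithBoundary G ∧ ∃ (v₀ : V) (lt : V → V → Prop), IsSLOStarOrdering G v₀ lt

end FK

namespace FK

/-- The comet on `n` vertices with `k` interior vertices: a path
`1, …, k` of interior vertices, with vertex `0` a boundary vertex attached to
vertex `1`, and the `n - k - 1` boundary vertices `k+1, …, n-1` attached to
vertex `k`. -/
def cometGraph (n k : ℕ) : SimpleGraph (Fin n) :=
  SimpleGraph.fromRel (fun i j => (i.val + 1 = j.val ∧ j.val ≤ k) ∨ (i.val = k ∧ k < j.val))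

/-- Membership in the class `T^(n,k)`: trees with boundary with `n` vertices
and `k` interior vertices. -/
def inClassT (k : ℕ) {n : ℕ} (G : SimpleGraph (Fin n)) : Prop :=
  IsTreeWithBoundary G ∧ (interiorFinset G).card = k

section Helpers

variable {V : Type*} [Fintype V]

/-! ### The Rayleigh principle -/

/-- The functions on which the Dirichlet operator acts: those vanishing on the boundary. -/
def Vanishes (G : SimpleGraph V) (f : V → ℝ) : Prop := ∀ v, IsBoundary G v → f v = 0

lemma lapApply_eq (G : SimpleGraph V) (f : V → ℝ) (v : V) :
    lapApply G f v = ∑ w, if G.Adj v w then f v - f w else 0 := by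
  rw [← Finset.sum_filter, lapApply, ← SimpleGraph.neighborFinset_eq_filter,
    Finset.sum_sub_distrib, Finset.sum_const, SimpleGraph.card_neighborFinset_eq_degree,
    nsmul_eq_mul]

lemma quadForm_eq (G : SimpleGraph V) (f : V → ℝ) :
    quadForm G f = (∑ v, ∑ w, if G.Adj v w then (f v - f w) ^ 2 else 0) / 2 := by
  rw [quadForm]
  congr 1
  refine Finset.sum_congr rfl fun v _ => ?_
  rw [← Finset.sum_filter, ← SimpleGraph.neighborFinset_eq_filter]

/-- Green's formula. -/
lemma green (G : SimpleGraph V) (f h : V → ℝ) :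
    (∑ v, ∑ w, if G.Adj v w then (f v - f w) * (h v - h w) else 0)
      = 2 * ∑ v, h v * lapApply G f v := by
  have h1 : ∑ v, h v * lapApply G f v
      = ∑ v, ∑ w, if G.Adj v w then (f v - f w) * h v else 0 := by
    refine Finset.sum_congr rfl fun v _ => ?_
    rw [lapApply_eq, Finset.mul_sum]
    refine Finset.sum_congr rfl fun w _ => ?_
    split_ifs <;> ring
  have h2 : ∑ v, h v * lapApply G f v
      = ∑ v, ∑ w, if G.Adj v w then - (f v - f w) * h w else 0 := by
    rw [h1, Finset.sum_comm]
    refine Finset.sum_congr rfl fun v _ => Finset.sum_congr rfl fun w _ => ?_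
    rw [G.adj_comm w v]
    split_ifs <;> ring
  rw [two_mul]
  nth_rewrite 1 [h1]
  rw [h2, ← Finset.sum_add_distrib]
  refine Finset.sum_congr rfl fun v _ => ?_
  rw [← Finset.sum_add_distrib]
  refine Finset.sum_congr rfl fun w _ => ?_
  split_ifs <;> ring

lemma quadForm_add (G : SimpleGraph V) (f h : V → ℝ) (t : ℝ) :
    quadForm G (fun v => f v + t * h v)
      = quadForm G f + 2 * t * ∑ v, h v * lapApply G f v + t ^ 2 * quadForm G h := by
  have hg := green G f h
  have : 2 * t * ∑ v, h v * lapApply G f v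
      = (∑ v, ∑ w, if G.Adj v w then 2 * t * ((f v - f w) * (h v - h w)) else 0) / 2 := by
    have h2 : (∑ v, ∑ w, if G.Adj v w then 2 * t * ((f v - f w) * (h v - h w)) else 0)
        = 2 * t * ∑ v, ∑ w, if G.Adj v w then (f v - f w) * (h v - h w) else 0 := by
      rw [Finset.mul_sum]
      refine Finset.sum_congr rfl fun v _ => ?_
      rw [Finset.mul_sum]
      refine Finset.sum_congr rfl fun w _ => ?_
      split_ifs <;> ring
    rw [h2, hg]; ring
  rw [this, quadForm_eq, quadForm_eq, quadForm_eq, mul_div_assoc', Finset.mul_sum, ← add_div,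
    ← add_div, ← Finset.sum_add_distrib, ← Finset.sum_add_distrib]
  congr 1
  refine Finset.sum_congr rfl fun v _ => ?_
  rw [Finset.mul_sum, ← Finset.sum_add_distrib, ← Finset.sum_add_distrib]
  refine Finset.sum_congr rfl fun w _ => ?_
  split_ifs <;> ring

lemma quadForm_self (G : SimpleGraph V) (f : V → ℝ) :
    quadForm G f = ∑ v, f v * lapApply G f v := by
  have := green G f f
  rw [quadForm_eq]
  simp_rw [pow_two]
  rw [this]; ring

/-- A minimizer of the Rayleigh quotient satisfies the eigenvalue equation. -/
lemma eigen_of_min (G : SimpleGraph V) {μ : ℝ} {f : V → ℝ}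
    (hmin : ∀ h, Vanishes G h → μ * ∑ v, h v ^ 2 ≤ quadForm G h)
    (hf : Vanishes G f) (hQ : quadForm G f = μ * ∑ v, f v ^ 2) (v : V)
    (hv : ¬ IsBoundary G v) : lapApply G f v = μ * f v := by
  set e : V → ℝ := Pi.single v 1 with he
  have hee : ∀ w, e w = if w = v then 1 else 0 := fun w => by
    rw [he, Pi.single_apply]
  have key : ∀ t : ℝ, 0 ≤ 2 * t * (lapApply G f v - μ * f v) + t ^ 2 * (quadForm G e - μ) := by
    intro t
    have h1 := hmin (fun w => f w + t * e w) (by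
      intro w hw
      have hne : w ≠ v := by rintro rfl; exact hv hw
      simp [hf w hw, hee, hne])
    rw [quadForm_add, hQ] at h1
    have h2 : ∑ w, e w * lapApply G f w = lapApply G f v := by simp [hee]
    have h3 : ∑ w, (f w + t * e w) ^ 2 = ∑ w, f w ^ 2 + 2 * t * f v + t ^ 2 := by
      have : ∀ w, (f w + t * e w) ^ 2
          = f w ^ 2 + (if w = v then 2 * t * f w else 0) + (if w = v then t ^ 2 else 0) := by
        intro w; rw [hee]; split_ifs <;> ring
      simp_rw [this, Finset.sum_add_distrib]
      simp
    rw [h2, h3] at h1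
    linarith
  by_contra hne
  have hd : lapApply G f v - μ * f v ≠ 0 := sub_ne_zero.2 hne
  set d := lapApply G f v - μ * f v
  set q := quadForm G e - μ
  -- a quadratic `2 t d + t² q` with `d ≠ 0` is negative for a small `t` of the sign of `-d`
  have hq : 0 < |q| + 1 := by positivity
  have h1 := key (-d / (|q| + 1))
  have h2 : 2 * (-d / (|q| + 1)) * d + (-d / (|q| + 1)) ^ 2 * q
      = d ^ 2 / (|q| + 1) ^ 2 * (q - 2 * (|q| + 1)) := by
    field_simp; ring
  rw [h2] at h1
  have h3 : 0 < d ^ 2 / (|q| + 1) ^ 2 := by positivity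
  have h4 : q - 2 * (|q| + 1) < 0 := by linarith [le_abs_self q, abs_nonneg q]
  nlinarith [mul_neg_of_pos_of_neg h3 h4]

lemma not_boundary_of_interior {G : SimpleGraph V} {v : V} (h : IsInterior G v) :
    ¬ IsBoundary G v := by
  unfold IsBoundary IsInterior at *; omega

/-- The first Dirichlet eigenvalue is the minimum of the Rayleigh quotient, attained at a
nonnegative function. The hypothesis `hdeg` excludes isolated vertices. -/
lemma exists_ground (G : SimpleGraph V) (hint : ∃ v, IsInterior G v)
    (hdeg : ∀ v, IsBoundary G v ∨ IsInterior G v) :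
    ∃ f : V → ℝ, (∀ v, 0 ≤ f v) ∧ Vanishes G f ∧ ∑ v, f v ^ 2 = 1 ∧
      quadForm G f = dirichletLambda G ∧
      ∀ h, Vanishes G h → dirichletLambda G * ∑ v, h v ^ 2 ≤ quadForm G h := by
  set K : Set (V → ℝ) := {f | Vanishes G f ∧ ∑ v, f v ^ 2 = 1} with hK
  have hclosed : IsClosed K := by
    have h1 : IsClosed {f : V → ℝ | Vanishes G f} := by
      simp only [Vanishes, Set.ofPred_forall]
      exact isClosed_iInter fun v => isClosed_iInter fun _ =>
        isClosed_eq (continuous_apply v) continuous_const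
    have h2 : IsClosed {f : V → ℝ | ∑ v, f v ^ 2 = 1} :=
      isClosed_eq (by fun_prop) continuous_const
    exact h1.inter h2
  have hcomp : IsCompact K := by
    refine Metric.isCompact_of_isClosed_isBounded hclosed ?_
    refine (Metric.isBounded_closedBall (x := (0 : V → ℝ)) (r := 1)).subset ?_
    rintro f ⟨-, hf⟩
    rw [mem_closedBall_zero_iff, pi_norm_le_iff_of_nonneg zero_le_one]
    intro v
    have : f v ^ 2 ≤ 1 := hf ▸ Finset.single_le_sum (f := fun v => f v ^ 2)
      (fun w _ => sq_nonneg _) (Finset.mem_univ v)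
    rw [Real.norm_eq_abs]
    exact (sq_le_one_iff_abs_le_one _).1 this
  have hne : K.Nonempty := by
    obtain ⟨v, hv⟩ := hint
    refine ⟨Pi.single v 1, fun w hw => ?_, ?_⟩
    · have : w ≠ v := by rintro rfl; exact not_boundary_of_interior hv hw
      simp [this]
    · simp [Pi.single_apply]
  have hcont : Continuous (quadForm G) := by
    have : quadForm G = fun f => (∑ v, ∑ w, if G.Adj v w then (f v - f w) ^ 2 else 0) / 2 :=
      funext (quadForm_eq G)
    rw [this]
    refine Continuous.div_const (continuous_finsetSum _ fun v _ =>
      continuous_finsetSum _ fun w _ => ?_) _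
    split_ifs <;> fun_prop
  obtain ⟨f₀, ⟨hf₀v, hf₀n⟩, hf₀m⟩ := hcomp.exists_isMinOn hne hcont.continuousOn
  set μ := quadForm G f₀ with hμ
  have hmin : ∀ h, Vanishes G h → μ * ∑ v, h v ^ 2 ≤ quadForm G h := by
    intro h hh
    rcases (Finset.sum_nonneg fun v _ => sq_nonneg (h v)).eq_or_lt with h0 | h0
    · rw [← h0, mul_zero, quadForm_eq]
      refine div_nonneg (Finset.sum_nonneg fun v _ => Finset.sum_nonneg fun w _ => ?_) two_pos.le
      split_ifs <;> positivity
    · set s : ℝ := ∑ v, h v ^ 2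
      have hs : Real.sqrt s ^ 2 = s := Real.sq_sqrt h0.le
      have hs0 : 0 < Real.sqrt s := Real.sqrt_pos.2 h0
      have hmem : (fun v => h v / Real.sqrt s) ∈ K := by
        refine ⟨fun v hv => by simp [hh v hv], ?_⟩
        simp_rw [div_pow, ← Finset.sum_div, hs]
        exact div_self h0.ne'
      have h1 : μ ≤ quadForm G (fun v => h v / Real.sqrt s) := hf₀m hmem
      have h2 : quadForm G (fun v => h v / Real.sqrt s) = quadForm G h / s := by
        rw [quadForm_eq, quadForm_eq, div_right_comm]
        congr 1
        rw [Finset.sum_div]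
        refine Finset.sum_congr rfl fun v _ => ?_
        rw [Finset.sum_div]
        refine Finset.sum_congr rfl fun w _ => ?_
        rw [← sub_div, div_pow, hs]
        split_ifs <;> simp
      rw [h2] at h1
      exact (le_div_iff₀ h0).1 h1
  have hlam : dirichletLambda G = μ := by
    refine IsLeast.csInf_eq ⟨⟨f₀, ?_, hf₀v, fun v hv => ?_⟩, ?_⟩
    · rintro rfl; simp at hf₀n
    · exact eigen_of_min G hmin hf₀v (by rw [hf₀n, mul_one]) v (not_boundary_of_interior hv)
    · rintro ν ⟨h, hh0, hhv, hhe⟩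
      have h1 := hmin h hhv
      have h2 : quadForm G h = ν * ∑ v, h v ^ 2 := by
        rw [quadForm_self, Finset.mul_sum]
        refine Finset.sum_congr rfl fun v _ => ?_
        rcases hdeg v with hv | hv
        · simp [hhv v hv]
        · rw [hhe v hv]; ring
      rw [h2] at h1
      have h3 : 0 < ∑ v, h v ^ 2 := by
        obtain ⟨v, hv⟩ := Function.ne_iff.1 hh0
        exact Finset.sum_pos' (fun w _ => sq_nonneg _) ⟨v, Finset.mem_univ _, by
          have : h v ≠ 0 := hv
          positivity⟩
      exact le_of_mul_le_mul_right h1 h3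
  rw [hlam]
  have habs : Vanishes G (fun v => |f₀ v|) := fun v hv => by simp [hf₀v v hv]
  have hn : ∑ v, |f₀ v| ^ 2 = 1 := by simpa using hf₀n
  refine ⟨fun v => |f₀ v|, fun v => abs_nonneg _, habs, hn, le_antisymm ?_ ?_, hmin⟩
  · rw [hμ, quadForm_eq, quadForm_eq]
    gcongr with v _ w _
    split_ifs
    · rw [sq_le_sq]; exact abs_abs_sub_abs_le_abs_sub _ _
    · exact le_rfl
  · have := hmin _ habs
    rwa [hn, mul_one] at this

/-- The first Dirichlet eigenvalue is invariant under isomorphism. -/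
lemma dirichletLambda_iso {G H : SimpleGraph V} (e : G ≃g H) : dirichletLambda G = dirichletLambda H := by
  have aux : ∀ {G H : SimpleGraph V} (e : G ≃g H) (μ : ℝ),
      (∃ f, IsDirichletEigenpair G μ f) → ∃ f, IsDirichletEigenpair H μ f := by
    intro G H e μ
    rintro ⟨f, h0, hb, hi⟩
    have hd : ∀ w, H.degree w = G.degree (e.symm w) := fun w => (e.symm.degree_eq w).symm
    refine ⟨f ∘ e.symm, fun h => h0 ?_, fun w hw => hb _ ?_, fun w hw => ?_⟩
    · funext v
      simpa using congrFun h (e v)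
    · unfold IsBoundary at *; rw [← hd]; exact hw
    · have := hi (e.symm w) (by unfold IsInterior at *; rw [← hd]; exact hw)
      rw [lapApply_eq] at this ⊢
      rw [Function.comp_apply, ← this]
      refine Fintype.sum_equiv e.symm.toEquiv _ _ fun x => ?_
      simp [e.symm.map_adj_iff]
  unfold dirichletLambda
  congr 1
  ext μ
  exact ⟨aux e μ, aux e.symm μ⟩

/-! ### The comet -/

/-- The parent of the vertex `j ≥ 1` in the comet rooted at its boundary vertex `0`. -/
def cometParent (k j : ℕ) : ℕ := if j ≤ k then j - 1 else k

/-- The spiral rank of the vertex `j` of the comet: boundary vertices have rank `0`, and the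
ranks `1, 2, 3, 4, …` are given to the interior vertices `k, 1, k - 1, 2, …`. -/
def cometRank (k j : ℕ) : ℕ := if k < j then 0 else if 2 * j ≤ k then 2 * j else 2 * (k - j) + 1

lemma comet_adj {n k : ℕ} (hk : 1 ≤ k) (i j : Fin n) :
    (cometGraph n k).Adj i j ↔ (1 ≤ j.val ∧ i.val = cometParent k j.val) ∨
      (1 ≤ i.val ∧ j.val = cometParent k i.val) := by
  rw [cometGraph, SimpleGraph.fromRel_adj]
  unfold cometParent
  rw [Ne, Fin.ext_iff]
  split_ifs <;> omega

/-- Each edge of the comet joins a unique vertex `j ≥ 1` to its parent. -/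
lemma comet_sum {n k : ℕ} (hk : 1 ≤ k) (hkn : k + 2 ≤ n) (F : ℕ → ℕ → ℝ)
    (hF : ∀ i j, F i j = F j i) :
    (∑ i : Fin n, ∑ j : Fin n, if (cometGraph n k).Adj i j then F i j else 0)
      = 2 * ∑ j ∈ Finset.Ico 1 n, F (cometParent k j) j := by
  have hex : ∀ i j : Fin n, (if (cometGraph n k).Adj i j then F i j else 0)
      = (if 1 ≤ j.val ∧ i.val = cometParent k j.val then F i j else 0)
        + (if 1 ≤ i.val ∧ j.val = cometParent k i.val then F j i else 0) := by
    intro i j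
    have hx : ¬ ((1 ≤ j.val ∧ i.val = cometParent k j.val) ∧
        (1 ≤ i.val ∧ j.val = cometParent k i.val)) := by
      unfold cometParent; split_ifs <;> omega
    by_cases h1 : 1 ≤ j.val ∧ i.val = cometParent k j.val
    · have h2 : ¬ (1 ≤ i.val ∧ j.val = cometParent k i.val) := fun h => hx ⟨h1, h⟩
      rw [if_pos ((comet_adj hk i j).2 (Or.inl h1)), if_pos h1, if_neg h2, add_zero]
    · by_cases h2 : 1 ≤ i.val ∧ j.val = cometParent k i.val
      · rw [if_pos ((comet_adj hk i j).2 (Or.inr h2)), if_neg h1, if_pos h2, zero_add, hF]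
      · rw [if_neg (fun h => ((comet_adj hk i j).1 h).elim h1 h2), if_neg h1, if_neg h2, add_zero]
  have hmain : (∑ i : Fin n, ∑ j : Fin n,
      if 1 ≤ j.val ∧ i.val = cometParent k j.val then F i j else 0)
      = ∑ j ∈ Finset.Ico 1 n, F (cometParent k j) j := by
    rw [Finset.sum_comm]
    have h1 : ∀ j : Fin n, (∑ i : Fin n,
        if 1 ≤ j.val ∧ i.val = cometParent k j.val then F i j else 0)
        = (fun j : ℕ => if 1 ≤ j then F (cometParent k j) j else 0) j.val := by
      intro j
      have hp : cometParent k j.val < n := by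
        have := j.isLt
        unfold cometParent; split_ifs <;> omega
      rw [Finset.sum_eq_single (⟨cometParent k j.val, hp⟩ : Fin n)]
      · simp
      · intro b _ hb
        rw [if_neg]
        rintro ⟨-, h⟩
        exact hb (Fin.ext h)
      · simp
    rw [Finset.sum_congr rfl fun j _ => h1 j,
      Fin.sum_univ_eq_sum_range (fun j : ℕ => if 1 ≤ j then F (cometParent k j) j else 0) n,
      ← Finset.sum_filter]
    refine Finset.sum_congr ?_ fun _ _ => rfl
    ext x; simp; omega
  simp_rw [hex, Finset.sum_add_distrib]
  rw [hmain, Finset.sum_comm, hmain, two_mul]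

lemma comet_connected {n k : ℕ} (hk : 1 ≤ k) (hkn : k + 2 ≤ n) :
    (cometGraph n k).Connected := by
  have hn : 0 < n := by omega
  have key : ∀ (j : ℕ) (hj : j < n), (cometGraph n k).Reachable ⟨j, hj⟩ ⟨0, hn⟩ := by
    intro j
    induction j using Nat.strong_induction_on with
    | _ j ih =>
      intro hj
      rcases Nat.eq_zero_or_pos j with rfl | h0
      · exact SimpleGraph.Reachable.refl _
      · have hp : cometParent k j < j := by unfold cometParent; split_ifs <;> omega
        have hadj : (cometGraph n k).Adj ⟨j, hj⟩ ⟨cometParent k j, hp.trans hj⟩ :=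
          (comet_adj hk _ _).2 (Or.inr ⟨h0, rfl⟩)
        exact hadj.reachable.trans (ih _ hp _)
  have : Nonempty (Fin n) := ⟨⟨0, hn⟩⟩
  exact ⟨fun u v => (key u u.isLt).trans (key v v.isLt).symm⟩

lemma comet_isTree {n k : ℕ} (hk : 1 ≤ k) (hkn : k + 2 ≤ n) : (cometGraph n k).IsTree := by
  rw [SimpleGraph.isTree_iff_connected_and_card]
  refine ⟨comet_connected hk hkn, ?_⟩
  have h1 := comet_sum hk hkn (fun _ _ => 1) (fun _ _ => rfl)
  have h2 : (∑ i : Fin n, ∑ j : Fin n, if (cometGraph n k).Adj i j then (1 : ℝ) else 0)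
      = ((2 * #(cometGraph n k).edgeFinset : ℕ) : ℝ) := by
    rw [← SimpleGraph.sum_degrees_eq_twice_card_edges]
    push_cast
    refine Finset.sum_congr rfl fun i _ => ?_
    rw [← SimpleGraph.card_neighborFinset_eq_degree, SimpleGraph.neighborFinset_eq_filter,
      Finset.sum_boole]
  rw [h2] at h1
  simp only [Finset.sum_const, Nat.card_Ico, nsmul_eq_mul, mul_one] at h1
  have h3 : 2 * #(cometGraph n k).edgeFinset = 2 * (n - 1) := by exact_mod_cast h1
  rw [Nat.card_eq_fintype_card, ← SimpleGraph.edgeFinset_card, Nat.card_eq_fintype_card,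
    Fintype.card_fin]
  omega

lemma comet_interior {n k : ℕ} (hk : 1 ≤ k) (hkn : k + 2 ≤ n) (j : Fin n)
    (h1 : 1 ≤ j.val) (h2 : j.val ≤ k) : IsInterior (cometGraph n k) j := by
  unfold IsInterior
  rw [← SimpleGraph.card_neighborFinset_eq_degree]
  change 1 < _
  rw [Finset.one_lt_card]
  refine ⟨⟨j.val - 1, by omega⟩, ?_, ⟨j.val + 1, by omega⟩, ?_, ?_⟩
  · rw [SimpleGraph.mem_neighborFinset, comet_adj hk]
    right
    simp only [cometParent]
    rw [if_pos h2]
    exact ⟨h1, rfl⟩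
  · rw [SimpleGraph.mem_neighborFinset, comet_adj hk]
    left
    simp only [cometParent]
    split_ifs <;> omega
  · rw [Ne, Fin.ext_iff]
    simp only
    omega

lemma comet_boundary {n k : ℕ} (hk : 1 ≤ k) (hkn : k + 2 ≤ n) (j : Fin n)
    (h : j.val = 0 ∨ k < j.val) : IsBoundary (cometGraph n k) j := by
  unfold IsBoundary
  rw [← SimpleGraph.card_neighborFinset_eq_degree, Finset.card_eq_one]
  rcases h with h | h
  · refine ⟨⟨1, by omega⟩, ?_⟩
    ext i
    rw [SimpleGraph.mem_neighborFinset, comet_adj hk, Finset.mem_singleton, Fin.ext_iff]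
    simp only [cometParent]
    split_ifs <;> omega
  · refine ⟨⟨k, by omega⟩, ?_⟩
    ext i
    rw [SimpleGraph.mem_neighborFinset, comet_adj hk, Finset.mem_singleton, Fin.ext_iff]
    simp only [cometParent]
    split_ifs <;> omega

lemma comet_boundary_iff {n k : ℕ} (hk : 1 ≤ k) (hkn : k + 2 ≤ n) (j : Fin n) :
    IsBoundary (cometGraph n k) j ↔ j.val = 0 ∨ k < j.val := by
  refine ⟨fun h => ?_, comet_boundary hk hkn j⟩
  by_contra hc
  exact not_boundary_of_interior (comet_interior hk hkn j (by omega) (by omega)) h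

lemma comet_interior_iff {n k : ℕ} (hk : 1 ≤ k) (hkn : k + 2 ≤ n) (j : Fin n) :
    IsInterior (cometGraph n k) j ↔ 1 ≤ j.val ∧ j.val ≤ k := by
  refine ⟨fun h => ?_, fun h => comet_interior hk hkn j h.1 h.2⟩
  by_contra hc
  exact not_boundary_of_interior h (comet_boundary hk hkn j (by omega))

lemma comet_inClassT {n k : ℕ} (hk : 1 ≤ k) (hkn : k + 2 ≤ n) : inClassT k (cometGraph n k) := by
  refine ⟨⟨comet_isTree hk hkn, ⟨⟨1, by omega⟩, comet_interior hk hkn _ le_rfl hk⟩,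
    ⟨⟨0, by omega⟩, comet_boundary hk hkn _ (Or.inl rfl)⟩⟩, ?_⟩
  have : (interiorFinset (cometGraph n k)).map Fin.valEmbedding = Finset.Icc 1 k := by
    ext j
    simp only [interiorFinset, Finset.mem_map, Finset.mem_filter, Finset.mem_univ, true_and,
      Finset.mem_Icc, comet_interior_iff hk hkn]
    constructor
    · rintro ⟨i, hi, rfl⟩; exact hi
    · intro hj; exact ⟨⟨j, by omega⟩, hj, rfl⟩
  rw [← Finset.card_map, this]
  simp

/-- The energy of the function with spiral value sequence `a` on the comet. With
`a (k + 1) = a k` the middle edge of the path, which joins the ranks `k - 1` and `k`, is the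
summand `i = k - 1`. -/
lemma comet_energy {n k : ℕ} (hk : 1 ≤ k) (hkn : k + 2 ≤ n) (a : ℕ → ℝ) (ha0 : a 0 = 0)
    (hak : a (k + 1) = a k) :
    quadForm (cometGraph n k) (fun j : Fin n => a (cometRank k j))
      = ∑ i ∈ Finset.range k, (a (i + 2) - a i) ^ 2 + ((n - k - 1 : ℕ) : ℝ) * a 1 ^ 2 := by
  rw [quadForm_eq, comet_sum hk hkn (fun i j => (a (cometRank k i) - a (cometRank k j)) ^ 2)
    (fun i j => by ring), mul_div_cancel_left₀ _ two_ne_zero,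
    ← Finset.sum_Ico_consecutive _ (show 1 ≤ k + 1 by omega) (show k + 1 ≤ n by omega)]
  congr 1
  · refine Finset.sum_nbij' (fun j => if 2 * j ≤ k + 1 then 2 * j - 2 else 2 * (k - j) + 1)
      (fun i => if i % 2 = 0 then i / 2 + 1 else k - (i - 1) / 2) ?_ ?_ ?_ ?_ ?_
    · intro j hj
      rw [Finset.mem_Ico] at hj
      rw [Finset.mem_range]
      split_ifs <;> omega
    · intro i hi
      rw [Finset.mem_range] at hi
      rw [Finset.mem_Ico]
      split_ifs <;> omega
    · intro j hj
      rw [Finset.mem_Ico] at hj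
      split_ifs <;> omega
    · intro i hi
      rw [Finset.mem_range] at hi
      split_ifs <;> omega
    · intro j hj
      rw [Finset.mem_Ico] at hj
      have hp : cometParent k j = j - 1 := by unfold cometParent; split_ifs <;> omega
      rw [hp]
      rcases lt_trichotomy (2 * j) (k + 1) with h | h | h
      · have e1 : cometRank k (j - 1) = 2 * j - 2 := by unfold cometRank; split_ifs <;> omega
        have e2 : cometRank k j = 2 * j - 2 + 2 := by unfold cometRank; split_ifs <;> omega
        rw [e1, e2, if_pos h.le]; ring
      · have e1 : cometRank k (j - 1) = 2 * j - 2 := by unfold cometRank; split_ifs <;> omega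
        have e2 : cometRank k j = k := by unfold cometRank; split_ifs <;> omega
        have e3 : 2 * j - 2 + 2 = k + 1 := by omega
        rw [e1, e2, if_pos h.le, e3, hak]; ring
      · have e2 : cometRank k j = 2 * (k - j) + 1 := by unfold cometRank; split_ifs <;> omega
        rw [e2, if_neg (by omega)]
        rcases Nat.lt_or_ge (k + 2) (2 * j) with h' | h'
        · have e1 : cometRank k (j - 1) = 2 * (k - j) + 1 + 2 := by
            unfold cometRank; split_ifs <;> omega
          rw [e1]
        · have e1 : cometRank k (j - 1) = k := by unfold cometRank; split_ifs <;> omega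
          have e3 : 2 * (k - j) + 1 + 2 = k + 1 := by omega
          rw [e1, e3, hak]
  · have : ∀ j ∈ Finset.Ico (k + 1) n,
        (a (cometRank k (cometParent k j)) - a (cometRank k j)) ^ 2 = a 1 ^ 2 := by
      intro j hj
      rw [Finset.mem_Ico] at hj
      have hp : cometRank k (cometParent k j) = 1 := by
        unfold cometParent cometRank; split_ifs <;> omega
      have hq : cometRank k j = 0 := by unfold cometRank; split_ifs <;> omega
      rw [hp, hq, ha0, sub_zero]
    rw [Finset.sum_congr rfl this, Finset.sum_const, Nat.card_Ico, nsmul_eq_mul,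
      Nat.sub_add_eq]

lemma comet_norm {n k : ℕ} (hkn : k + 2 ≤ n) (a : ℕ → ℝ) (ha0 : a 0 = 0) :
    ∑ j : Fin n, a (cometRank k j) ^ 2 = ∑ i ∈ Finset.Icc 1 k, a i ^ 2 := by
  rw [Fin.sum_univ_eq_sum_range (fun j => a (cometRank k j) ^ 2) n]
  symm
  have hsub : Finset.Icc 1 k ⊆ Finset.range n := by
    intro j hj
    rw [Finset.mem_Icc] at hj
    rw [Finset.mem_range]; omega
  rw [← Finset.sum_subset hsub]
  · refine Finset.sum_nbij' (fun i => if i % 2 = 0 then i / 2 else k - (i - 1) / 2)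
      (fun j => cometRank k j) ?_ ?_ ?_ ?_ ?_
    · intro i hi
      rw [Finset.mem_Icc] at hi ⊢
      split_ifs <;> omega
    · intro j hj
      rw [Finset.mem_Icc] at hj ⊢
      unfold cometRank; split_ifs <;> omega
    · intro i hi
      rw [Finset.mem_Icc] at hi
      unfold cometRank; split_ifs <;> omega
    · intro j hj
      rw [Finset.mem_Icc] at hj
      unfold cometRank; split_ifs <;> omega
    · intro i hi
      rw [Finset.mem_Icc] at hi
      have : cometRank k (if i % 2 = 0 then i / 2 else k - (i - 1) / 2) = i := by
        unfold cometRank; split_ifs <;> omega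
      rw [this]
  · intro j _ hj
    rw [Finset.mem_Icc] at hj
    have : cometRank k j = 0 := by unfold cometRank; split_ifs <;> omega
    rw [this, ha0]; ring

lemma comet_lap_lt {n k : ℕ} (hk : 1 ≤ k) (hkn : k + 2 ≤ n) (g : ℕ → ℝ) (j : Fin n)
    (h1 : 1 ≤ j.val) (h2 : j.val < k) :
    lapApply (cometGraph n k) (fun i : Fin n => g i) j
      = 2 * g j - g (j - 1) - g (j + 1) := by
  have hN : (cometGraph n k).neighborFinset j
      = {(⟨j.val - 1, by omega⟩ : Fin n), (⟨j.val + 1, by omega⟩ : Fin n)} := by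
    ext i
    rw [SimpleGraph.mem_neighborFinset, comet_adj hk, Finset.mem_insert, Finset.mem_singleton,
      Fin.ext_iff, Fin.ext_iff]
    simp only [cometParent]
    split_ifs <;> omega
  have hne : (⟨j.val - 1, by omega⟩ : Fin n) ≠ (⟨j.val + 1, by omega⟩ : Fin n) := by
    rw [Ne, Fin.ext_iff]; simp only; omega
  rw [lapApply, ← SimpleGraph.card_neighborFinset_eq_degree, hN, Finset.sum_pair hne,
    Finset.card_pair hne]
  push_cast
  ring

lemma comet_lap_top {n k : ℕ} (hk : 1 ≤ k) (hkn : k + 2 ≤ n) (g : ℕ → ℝ)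
    (hg : ∀ i, k < i → g i = 0) (j : Fin n) (hj : j.val = k) :
    lapApply (cometGraph n k) (fun i : Fin n => g i) j
      = (g k - g (k - 1)) + ((n - k - 1 : ℕ) : ℝ) * g k := by
  rw [lapApply_eq]
  have h1 : ∀ i : Fin n, (if (cometGraph n k).Adj j i then g j - g i else 0)
      = (fun i : ℕ => (if i = k - 1 then g k - g (k - 1) else 0)
          + (if k < i then g k else 0)) i.val := by
    intro i
    have hadj : (cometGraph n k).Adj j i ↔ i.val = k - 1 ∨ k < i.val := by
      rw [comet_adj hk]
      simp only [cometParent]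
      split_ifs <;> omega
    simp only [hadj, hj]
    by_cases h1 : i.val = k - 1
    · rw [if_pos (Or.inl h1), if_pos h1, if_neg (by omega), h1, add_zero]
    · by_cases h2 : k < i.val
      · rw [if_pos (Or.inr h2), if_neg h1, if_pos h2, hg _ h2]; ring
      · rw [if_neg (by tauto), if_neg h1, if_neg h2, add_zero]
  rw [Finset.sum_congr rfl fun i _ => h1 i,
    Fin.sum_univ_eq_sum_range (fun i : ℕ => (if i = k - 1 then g k - g (k - 1) else 0)
          + (if k < i then g k else 0)) n, Finset.sum_add_distrib, Finset.sum_ite_eq',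
    if_pos (Finset.mem_range.2 (by omega)), ← Finset.sum_filter, Finset.sum_const, nsmul_eq_mul]
  congr 3
  have : (Finset.range n).filter (fun i => k < i) = Finset.Ico (k + 1) n := by
    ext i; simp; omega
  rw [this, Nat.card_Ico, Nat.sub_add_eq]

/-! ### Spiral sequences -/

/-- A nonnegative eigenfunction of the comet with at least three boundary vertices has no
repeated values: if `p` were the first index with `a p = a (p + 1)`, subtracting the eigenvalue
equations of ranks `p` and `p + 1` would produce a descent two steps further. Here `d > 0` is the
excess degree of the vertex of rank `1`. -/
lemma gaps_pos {k : ℕ} (hk : 1 ≤ k) {a : ℕ → ℝ} {c d : ℝ} (hd : 0 < d) (hmono : Monotone a)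
    (ha0 : a 0 = 0) (hak : a (k + 1) = a k) (hne : ∃ i, i ≤ k ∧ a i ≠ 0)
    (h1 : 2 ≤ k → c * a 1 = - d * a 1 + a 3)
    (h2 : ∀ i, i + 3 ≤ k → c * a (i + 2) = a i + a (i + 4))
    (h3 : ∀ i, i + 2 = k → c * a (i + 2) = a i + a (i + 1)) :
    ∀ p, p < k → a p < a (p + 1) := by
  have hpos : 0 < a 1 := by
    by_contra hc
    have ha1 : a 1 = 0 := le_antisymm (not_lt.1 hc) (ha0 ▸ hmono zero_le_one)
    obtain ⟨i, hi, hi0⟩ := hne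
    apply hi0
    clear hi0
    induction i using Nat.strong_induction_on with
    | _ i ih =>
      have ha3 : 2 ≤ k → a 3 = 0 := fun hk2 => by
        have := h1 hk2; rw [ha1] at this; linarith
      match i, hi with
      | 0, _ => exact ha0
      | 1, _ => exact ha1
      | 2, hi =>
        refine le_antisymm ?_ (ha0 ▸ hmono (Nat.zero_le _))
        rw [← ha3 hi]
        exact hmono (by omega)
      | 3, hi => exact ha3 (by omega)
      | i + 4, hi =>
        have e := h2 i (by omega)
        rw [ih i (by omega) (by omega), ih (i + 2) (by omega) (by omega)] at e
        linarith
  intro p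
  induction p using Nat.strong_induction_on with
  | _ p ih =>
    intro hp
    refine lt_of_le_of_ne (hmono (Nat.le_succ p)) fun heq => ?_
    match p, hp with
    | 0, _ => simp only [zero_add] at heq; linarith
    | 1, hp =>
      have e1 := h1 hp
      simp only [Nat.reduceAdd] at heq
      rcases Nat.lt_or_ge 2 k with hk3 | hk2
      · have e2 := h2 0 hk3
        have : a 3 ≤ a 4 := hmono (by omega)
        simp only [zero_add] at e2
        rw [← heq] at e2
        nlinarith
      · have hk2 : k = 2 := by omega
        have e2 := h3 0 hk2.symm
        subst hk2
        simp only [zero_add, Nat.reduceAdd] at e2 hak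
        rw [← heq] at e2 hak
        nlinarith
    | q + 2, hp =>
      have e1 := h2 q (by omega)
      have hlt := ih q (by omega) (by omega)
      simp only [add_assoc, Nat.reduceAdd] at heq
      rcases Nat.lt_or_ge (q + 3) k with hk3 | hk2
      · have e2 := h2 (q + 1) (by omega)
        simp only [add_assoc, Nat.reduceAdd] at e2
        have : a (q + 4) ≤ a (q + 5) := hmono (by omega)
        rw [← heq] at e2
        linarith
      · have hk2 : k = q + 3 := by omega
        have e2 := h3 (q + 1) (by omega)
        subst hk2
        simp only [add_assoc, Nat.reduceAdd] at e2 hak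
        rw [← heq] at e2 hak
        linarith

/-- The eigenvalue equations of the comet, read along the spiral ranks, rule out ties. -/
lemma comet_gaps {n k : ℕ} (hk : 1 ≤ k) (hkn : k + 3 ≤ n) {a : ℕ → ℝ} {μ : ℝ}
    (hmono : Monotone a) (ha0 : a 0 = 0) (hak : a (k + 1) = a k) (hne : ∃ i, i ≤ k ∧ a i ≠ 0)
    (heig : ∀ v, IsInterior (cometGraph n k) v →
      lapApply (cometGraph n k) (fun j : Fin n => a (cometRank k j)) v
        = μ * a (cometRank k v)) :
    ∀ p, p < k → a p < a (p + 1) := by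
  have hkn' : k + 2 ≤ n := by omega
  have hlt : ∀ j, 1 ≤ j → j < k → (2 - μ) * a (cometRank k j)
      = a (cometRank k (j - 1)) + a (cometRank k (j + 1)) := by
    intro j hj1 hj2
    have h := heig ⟨j, by omega⟩ (comet_interior hk hkn' _ hj1 hj2.le)
    rw [comet_lap_lt hk hkn' (fun i => a (cometRank k i)) _ hj1 hj2] at h
    simp only at h
    linarith
  refine gaps_pos (c := 2 - μ) (d := ((n - k - 2 : ℕ) : ℝ)) hk
    (by exact_mod_cast (by omega : 0 < n - k - 2)) hmono ha0 hak hne ?_ ?_ ?_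
  · intro hk2
    have h := heig ⟨k, by omega⟩ (comet_interior hk hkn' _ hk le_rfl)
    rw [comet_lap_top hk hkn' (fun i => a (cometRank k i)) (fun i hi => by
      have : cometRank k i = 0 := by unfold cometRank; split_ifs <;> omega
      simp only [this, ha0]) _ rfl] at h
    have e1 : cometRank k k = 1 := by unfold cometRank; split_ifs <;> omega
    have e2 : a (cometRank k (k - 1)) = a 3 := by
      rcases Nat.lt_or_ge 2 k with h' | h'
      · congr 1; unfold cometRank; split_ifs <;> omega
      · have : k = 2 := by omega
        subst this
        simpa [cometRank] using hak.symm
    have e3 : ((n - k - 1 : ℕ) : ℝ) = ((n - k - 2 : ℕ) : ℝ) + 1 := by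
      exact_mod_cast (by omega : n - k - 1 = n - k - 2 + 1)
    simp only [e1, e2, e3] at h
    linarith
  · intro i hi
    rcases Nat.even_or_odd' i with ⟨t, rfl | rfl⟩
    · have h := hlt (t + 1) (by omega) (by omega)
      have e1 : cometRank k (t + 1) = 2 * t + 2 := by unfold cometRank; split_ifs <;> omega
      have e2 : cometRank k (t + 1 - 1) = 2 * t := by unfold cometRank; split_ifs <;> omega
      have e3 : a (cometRank k (t + 1 + 1)) = a (2 * t + 4) := by
        rcases Nat.lt_or_ge (2 * t + 3) k with h' | h'
        · congr 1; unfold cometRank; split_ifs <;> omega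
        · have : cometRank k (t + 1 + 1) = k := by unfold cometRank; split_ifs <;> omega
          rw [this, ← hak]; congr 1; omega
      rw [e1, e2, e3] at h
      exact h
    · have h := hlt (k - (t + 1)) (by omega) (by omega)
      have e1 : cometRank k (k - (t + 1)) = 2 * t + 1 + 2 := by
        unfold cometRank; split_ifs <;> omega
      have e2 : cometRank k (k - (t + 1) + 1) = 2 * t + 1 := by
        unfold cometRank; split_ifs <;> omega
      have e3 : a (cometRank k (k - (t + 1) - 1)) = a (2 * t + 1 + 4) := by
        rcases Nat.lt_or_ge (2 * t + 4) k with h' | h'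
        · congr 1; unfold cometRank; split_ifs <;> omega
        · have : cometRank k (k - (t + 1) - 1) = k := by unfold cometRank; split_ifs <;> omega
          rw [this, ← hak]; congr 1; omega
      rw [e1, e2, e3] at h
      linarith
  · intro i hi
    rcases Nat.even_or_odd' i with ⟨t, rfl | rfl⟩
    · have h := hlt (t + 1) (by omega) (by omega)
      have e1 : cometRank k (t + 1) = 2 * t + 2 := by unfold cometRank; split_ifs <;> omega
      have e2 : cometRank k (t + 1 - 1) = 2 * t := by unfold cometRank; split_ifs <;> omega
      have e3 : cometRank k (t + 1 + 1) = 2 * t + 1 := by unfold cometRank; split_ifs <;> omega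
      rw [e1, e2, e3] at h
      exact h
    · have h := hlt (k - (t + 1)) (by omega) (by omega)
      have e1 : cometRank k (k - (t + 1)) = 2 * t + 1 + 2 := by
        unfold cometRank; split_ifs <;> omega
      have e2 : cometRank k (k - (t + 1) + 1) = 2 * t + 1 := by
        unfold cometRank; split_ifs <;> omega
      have e3 : cometRank k (k - (t + 1) - 1) = 2 * t + 1 + 1 := by
        unfold cometRank; split_ifs <;> omega
      rw [e1, e2, e3] at h
      linarith

/-! ### Counting crossing edges in a tree -/

/-- In a rooted tree the parent of a vertex is unique. -/
lemma parent_unique {V : Type*} {G : SimpleGraph V} (hG : G.IsTree) {x u v w : V}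
    (hu : G.Adj u w) (hv : G.Adj v w) (hdu : G.dist x w = G.dist x u + 1)
    (hdv : G.dist x w = G.dist x v + 1) : u = v := by
  have key : ∀ y, G.Adj y w → G.dist x w = G.dist x y + 1 →
      ∃ q : G.Walk x w, q.IsPath ∧ q.penultimate = y := by
    intro y hy hd
    obtain ⟨p, hp⟩ := hG.connected.exists_walk_length_eq_dist x y
    refine ⟨p.concat hy, ?_, SimpleGraph.Walk.penultimate_concat _ _⟩
    apply SimpleGraph.Walk.isPath_of_length_eq_dist
    rw [SimpleGraph.Walk.length_concat, hp, hd]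
  obtain ⟨p, hp, hpu⟩ := key u hu hdu
  obtain ⟨q, hq, hqv⟩ := key v hv hdv
  have : p = q := congrArg Subtype.val
    ((hG.isAcyclic.subsingleton_path x w).elim ⟨p, hp⟩ ⟨q, hq⟩)
  rw [← hpu, ← hqv, this]

/-- A nonempty set `S` of vertices of a tree spans at most `|S| - 1` edges (here each edge is
counted twice). -/
lemma forest_bound {G : SimpleGraph V} (hG : G.IsTree) {S : Finset V} (hS : S.Nonempty) :
    #{x : V × V | G.Adj x.1 x.2 ∧ x.1 ∈ S ∧ x.2 ∈ S} + 2 ≤ 2 * #S := by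
  obtain ⟨z, hz⟩ := hS
  set A : Finset (V × V) :=
    {x : V × V | G.Adj x.1 x.2 ∧ x.1 ∈ S ∧ x.2 ∈ S ∧ G.dist z x.2 = G.dist z x.1 + 1} with hA
  set B : Finset (V × V) :=
    {x : V × V | G.Adj x.1 x.2 ∧ x.1 ∈ S ∧ x.2 ∈ S ∧ G.dist z x.1 = G.dist z x.2 + 1} with hB
  have hAc : #A ≤ #(S.erase z) := by
    refine Finset.card_le_card_of_injOn Prod.snd ?_ ?_
    · intro x hx
      simp only [hA, Finset.coe_filter, Set.mem_ofPred_eq, Finset.mem_univ, true_and] at hx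
      rw [Finset.mem_coe, Finset.mem_erase]
      refine ⟨?_, hx.2.2.1⟩
      intro h
      have := hx.2.2.2
      rw [h, SimpleGraph.dist_self] at this
      omega
    · rintro ⟨u, w⟩ hx ⟨v, w'⟩ hy hxy
      simp only [hA, Finset.coe_filter, Set.mem_ofPred_eq, Finset.mem_univ, true_and] at hx hy
      simp only at hxy
      subst hxy
      rw [parent_unique hG hx.1 hy.1 hx.2.2.2 hy.2.2.2]
  have hBA : #B = #A := by
    refine Finset.card_bij (fun x _ => x.swap) ?_ ?_ ?_
    · intro x hx
      simp only [hA, hB, Finset.mem_filter, Finset.mem_univ, true_and, Prod.fst_swap,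
        Prod.snd_swap] at hx ⊢
      exact ⟨hx.1.symm, hx.2.2.1, hx.2.1, hx.2.2.2⟩
    · intro x _ y _ h
      exact Prod.swap_injective h
    · intro x hx
      refine ⟨x.swap, ?_, Prod.swap_swap x⟩
      simp only [hA, hB, Finset.mem_filter, Finset.mem_univ, true_and, Prod.fst_swap,
        Prod.snd_swap] at hx ⊢
      exact ⟨hx.1.symm, hx.2.2.1, hx.2.1, hx.2.2.2⟩
  have hsub : (Finset.univ.filter fun x : V × V => G.Adj x.1 x.2 ∧ x.1 ∈ S ∧ x.2 ∈ S) ⊆ A ∪ B := by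
    intro x hx
    simp only [hA, hB, Finset.mem_filter, Finset.mem_univ, true_and, Finset.mem_union] at hx ⊢
    rcases hG.dist_eq_dist_add_one_of_adj z hx.1 with h | h <;> tauto
  have h1 := Finset.card_le_card hsub
  have h2 := Finset.card_union_le A B
  have h3 := Finset.card_erase_add_one hz
  omega

lemma sum_degree_eq (G : SimpleGraph V) (S : Finset V) :
    ∑ w ∈ S, G.degree w = #{x : V × V | G.Adj x.1 x.2 ∧ x.2 ∈ S} := by
  rw [Finset.card_filter, Fintype.sum_prod_type_right, ← Finset.sum_filter_add_sum_filter_not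
    Finset.univ (fun w => w ∈ S)]
  have h0 : ∑ w with w ∉ S, ∑ v, (if G.Adj v w ∧ w ∈ S then 1 else 0) = 0 := by
    refine Finset.sum_eq_zero fun w hw => Finset.sum_eq_zero fun v _ => ?_
    rw [if_neg]
    intro h
    exact (Finset.mem_filter.1 hw).2 h.2
  simp only [h0, add_zero]
  refine Finset.sum_congr (by ext; simp) fun w hw => ?_
  rw [Finset.mem_filter] at hw
  rw [← SimpleGraph.card_neighborFinset_eq_degree, SimpleGraph.neighborFinset_eq_filter,
    Finset.card_filter]
  refine Finset.sum_congr rfl fun v _ => ?_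
  simp [hw.2, G.adj_comm v w]

/-- At least two edges leave every nonempty set of interior vertices. -/
lemma two_le_cross {G : SimpleGraph V} (hG : G.IsTree) {S : Finset V} (hS : S.Nonempty)
    (hint : ∀ v ∈ S, IsInterior G v) :
    2 ≤ #{x : V × V | G.Adj x.1 x.2 ∧ x.1 ∉ S ∧ x.2 ∈ S} := by
  have h1 := forest_bound hG hS
  have h2 : 2 * #S ≤ ∑ w ∈ S, G.degree w := by
    rw [mul_comm, ← smul_eq_mul, ← Finset.sum_const]
    exact Finset.sum_le_sum fun v hv => hint v hv
  rw [sum_degree_eq] at h2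
  have h3 : #{x : V × V | G.Adj x.1 x.2 ∧ x.2 ∈ S}
      = #{x : V × V | G.Adj x.1 x.2 ∧ x.1 ∉ S ∧ x.2 ∈ S}
        + #{x : V × V | G.Adj x.1 x.2 ∧ x.1 ∈ S ∧ x.2 ∈ S} := by
    simp only [Finset.card_filter, ← Finset.sum_add_distrib]
    refine Finset.sum_congr rfl fun x _ => ?_
    by_cases h1 : G.Adj x.1 x.2 <;> by_cases h2 : x.1 ∈ S <;> by_cases h3 : x.2 ∈ S <;>
      simp [h1, h2, h3]
  omega

/-- At least one edge leaving a nonempty set of interior vertices avoids a given outside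
vertex `z`: otherwise `z` and a component of `S` would carry a cycle. -/
lemma one_le_cross {G : SimpleGraph V} (hG : G.IsTree) {S : Finset V} (hS : S.Nonempty)
    (hint : ∀ v ∈ S, IsInterior G v) {z : V} (hz : z ∉ S) :
    1 ≤ #{x : V × V | G.Adj x.1 x.2 ∧ x.1 ≠ z ∧ x.1 ∉ S ∧ x.2 ∈ S} := by
  have h1 := forest_bound hG hS
  have h1' := forest_bound hG (S := insert z S) (Finset.insert_nonempty _ _)
  rw [Finset.card_insert_of_notMem hz] at h1'
  have h2 : 2 * #S ≤ ∑ w ∈ S, G.degree w := by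
    rw [mul_comm, ← smul_eq_mul, ← Finset.sum_const]
    exact Finset.sum_le_sum fun v hv => hint v hv
  rw [sum_degree_eq] at h2
  have h3 : #{x : V × V | G.Adj x.1 x.2 ∧ x.2 ∈ S}
      = #{x : V × V | G.Adj x.1 x.2 ∧ x.1 ≠ z ∧ x.1 ∉ S ∧ x.2 ∈ S}
        + #{x : V × V | G.Adj x.1 x.2 ∧ x.1 = z ∧ x.2 ∈ S}
        + #{x : V × V | G.Adj x.1 x.2 ∧ x.1 ∈ S ∧ x.2 ∈ S} := by
    simp only [Finset.card_filter, ← Finset.sum_add_distrib]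
    refine Finset.sum_congr rfl fun x _ => ?_
    by_cases hx : x.1 = z
    · simp [hx, hz]
    · by_cases h1 : G.Adj x.1 x.2 <;> by_cases h2 : x.1 ∈ S <;> by_cases h3 : x.2 ∈ S <;>
        simp [h1, h2, h3, hx]
  have h4 : #{x : V × V | G.Adj x.1 x.2 ∧ x.1 ∈ insert z S ∧ x.2 ∈ insert z S}
      = #{x : V × V | G.Adj x.1 x.2 ∧ x.1 = z ∧ x.2 ∈ S}
        + #{x : V × V | G.Adj x.1 x.2 ∧ x.1 ∈ S ∧ x.2 = z}
        + #{x : V × V | G.Adj x.1 x.2 ∧ x.1 ∈ S ∧ x.2 ∈ S} := by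
    simp only [Finset.card_filter, ← Finset.sum_add_distrib]
    refine Finset.sum_congr rfl fun x _ => ?_
    by_cases hx : x.1 = z <;> by_cases hy : x.2 = z
    · simp [hx, hy]
    · simp [hx, hy, hz]
    · simp [hx, hy, hz]
    · by_cases h1 : G.Adj x.1 x.2 <;> by_cases h2 : x.1 ∈ S <;> by_cases h3 : x.2 ∈ S <;>
        simp [h1, h2, h3, hx, hy]
  have h5 : #{x : V × V | G.Adj x.1 x.2 ∧ x.1 ∈ S ∧ x.2 = z}
      = #{x : V × V | G.Adj x.1 x.2 ∧ x.1 = z ∧ x.2 ∈ S} := by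
    refine Finset.card_bij (fun x _ => x.swap) ?_ ?_ ?_
    · intro x hx
      simp only [Finset.mem_filter, Finset.mem_univ, true_and, Prod.fst_swap,
        Prod.snd_swap] at hx ⊢
      exact ⟨hx.1.symm, hx.2.2, hx.2.1⟩
    · intro x _ y _ h
      exact Prod.swap_injective h
    · intro x hx
      refine ⟨x.swap, ?_, Prod.swap_swap x⟩
      simp only [Finset.mem_filter, Finset.mem_univ, true_and, Prod.fst_swap,
        Prod.snd_swap] at hx ⊢
      exact ⟨hx.1.symm, hx.2.2, hx.2.1⟩
  omega

/-- In a tree with boundary every vertex is a boundary vertex or an interior vertex. -/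
lemma boundary_or_interior {G : SimpleGraph V} (hG : IsTreeWithBoundary G) (v : V) :
    IsBoundary G v ∨ IsInterior G v := by
  obtain ⟨ht, ⟨x, hx⟩, ⟨y, hy⟩⟩ := hG
  have hne : x ≠ y := by rintro rfl; exact not_boundary_of_interior hx hy
  have : Nontrivial V := ⟨x, y, hne⟩
  have := ht.connected.preconnected.degree_pos_of_nontrivial v
  unfold IsBoundary IsInterior
  omega

/-- The neighbour of a boundary vertex of a tree with boundary is interior. -/
lemma interior_of_adj_boundary {G : SimpleGraph V} (hG : IsTreeWithBoundary G) {u w : V}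
    (hu : IsBoundary G u) (huw : G.Adj u w) : IsInterior G w := by
  rcases boundary_or_interior hG w with hw | hw
  · exfalso
    obtain ⟨x, hx⟩ := hG.2.1
    have huniq : ∀ {y z z' : V}, IsBoundary G y → G.Adj y z → G.Adj y z' → z = z' := by
      intro y z z' hy h1 h2
      unfold IsBoundary at hy
      rw [← SimpleGraph.card_neighborFinset_eq_degree] at hy
      exact Finset.card_le_one.1 hy.le z (by simpa using h1) z' (by simpa using h2)
    -- the two adjacent boundary vertices would form a connected component
    have hclosed : ∀ y, G.Reachable u y → y = u ∨ y = w := by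
      rintro y ⟨p⟩
      have : ∀ {s t : V} (p : G.Walk s t), (s = u ∨ s = w) → (t = u ∨ t = w) := by
        intro s t p
        induction p with
        | nil => exact id
        | cons h p ih =>
          rintro (rfl | rfl)
          · exact ih (Or.inr (huniq hu h huw))
          · exact ih (Or.inl (huniq hw h huw.symm))
      exact this p (Or.inl rfl)
    rcases hclosed x (hG.1.connected u x) with rfl | rfl
    · exact not_boundary_of_interior hx hu
    · exact not_boundary_of_interior hx hw
  · exact hw

/-! ### Ranked trees -/

/-- A ranking of the vertices of `G`: boundary vertices have rank `0`, and the interior vertices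
carry the ranks `1, …, k` bijectively. -/
structure IsRanking (G : SimpleGraph V) (k : ℕ) (r : V → ℕ) : Prop where
  zero_iff : ∀ v, r v = 0 ↔ IsBoundary G v
  le : ∀ v, r v ≤ k
  inj : ∀ u v, r u = r v → r u ≠ 0 → u = v
  surj : ∀ i, 1 ≤ i → i ≤ k → ∃ v, r v = i

/-- The number of edges crossing the gap between the ranks `p` and `p + 1`. -/
def crossOne (G : SimpleGraph V) (r : V → ℕ) (p : ℕ) : ℕ :=
  #{x : V × V | G.Adj x.1 x.2 ∧ r x.1 ≤ p ∧ p < r x.2}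

/-- The number of edges crossing both gaps between the ranks `p`, `p + 1` and `p + 2`. -/
def crossTwo (G : SimpleGraph V) (r : V → ℕ) (p : ℕ) : ℕ :=
  #{x : V × V | G.Adj x.1 x.2 ∧ r x.1 ≤ p ∧ p + 1 < r x.2}

lemma IsRanking.interior {G : SimpleGraph V} {k : ℕ} {r : V → ℕ} (hr : IsRanking G k r)
    (hG : IsTreeWithBoundary G) {v : V} (hv : r v ≠ 0) : IsInterior G v :=
  (boundary_or_interior hG v).resolve_left fun h => hv ((hr.zero_iff v).2 h)

lemma crossOne_ge {G : SimpleGraph V} {k : ℕ} {r : V → ℕ} (hr : IsRanking G k r)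
    (hG : IsTreeWithBoundary G) {p : ℕ} (hp : p < k) : 2 ≤ crossOne G r p := by
  obtain ⟨v, hv⟩ := hr.surj (p + 1) (by omega) hp
  have h := two_le_cross hG.1 (S := Finset.univ.filter fun v => p < r v)
    ⟨v, by simp [hv]⟩ (fun w hw => hr.interior hG (by simp at hw; omega))
  refine h.trans (Finset.card_le_card ?_)
  intro x hx
  simp only [Finset.mem_filter, Finset.mem_univ, true_and, not_lt] at hx ⊢
  exact hx

lemma crossTwo_ge {G : SimpleGraph V} {k : ℕ} {r : V → ℕ} (hr : IsRanking G k r)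
    (hG : IsTreeWithBoundary G) {p : ℕ} (hp : p + 1 < k) : 1 ≤ crossTwo G r p := by
  obtain ⟨v, hv⟩ := hr.surj (p + 2) (by omega) hp
  obtain ⟨z, hz⟩ := hr.surj (p + 1) (by omega) (by omega)
  have h := one_le_cross hG.1 (S := Finset.univ.filter fun v => p + 1 < r v)
    ⟨v, by simp [hv]⟩ (fun w hw => hr.interior hG (by simp at hw; omega)) (z := z) (by simp [hz])
  refine h.trans (Finset.card_le_card ?_)
  intro x hx
  simp only [Finset.mem_filter, Finset.mem_univ, true_and, not_lt] at hx ⊢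
  refine ⟨hx.1, ?_, hx.2.2.2⟩
  have : r x.1 ≠ p + 1 := fun h => hx.2.1 (hr.inj _ _ (by omega) (by omega))
  omega

lemma crossOne_zero {G : SimpleGraph V} {k : ℕ} {r : V → ℕ} (hr : IsRanking G k r)
    (hG : IsTreeWithBoundary G) : #{v | IsBoundary G v} ≤ crossOne G r 0 := by
  have hn : ∀ v, IsBoundary G v → ∃ w, G.Adj v w := by
    intro v hv
    unfold IsBoundary at hv
    rw [← SimpleGraph.card_neighborFinset_eq_degree] at hv
    obtain ⟨w, hw⟩ := Finset.card_pos.1 (by omega : 0 < #(G.neighborFinset v))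
    exact ⟨w, by simpa using hw⟩
  choose! nb hnb using hn
  refine Finset.card_le_card_of_injOn (fun v => (v, nb v)) ?_ ?_
  · intro v hv
    simp only [Finset.coe_filter, Finset.mem_univ, true_and, Set.mem_ofPred_eq] at hv ⊢
    refine ⟨hnb v hv, ((hr.zero_iff v).2 hv).le, ?_⟩
    have := not_boundary_of_interior (interior_of_adj_boundary hG hv (hnb v hv))
    exact Nat.pos_of_ne_zero fun h => this ((hr.zero_iff _).1 h)
  · intro u _ v _ h
    exact congrArg Prod.fst h

/-! ### Energy of a ranked tree -/

/-- The square of an increment of a monotone sequence dominates the squares of its gaps together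
with the products of consecutive gaps. -/
lemma sq_gap_ge {a : ℕ → ℝ} (hmono : Monotone a) (i t : ℕ) :
    ∑ p ∈ Finset.Ico i (i + t), (a (p + 1) - a p) ^ 2
      + 2 * ∑ p ∈ Finset.Ico i (i + t - 1), (a (p + 1) - a p) * (a (p + 2) - a (p + 1))
      ≤ (a (i + t) - a i) ^ 2 := by
  induction t with
  | zero => simp
  | succ t ih =>
    rcases Nat.eq_zero_or_pos t with rfl | ht
    · simp
    · obtain ⟨s, rfl⟩ : ∃ s, t = s + 1 := ⟨t - 1, by omega⟩
      rw [← add_assoc, Finset.sum_Ico_succ_top (by omega)]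
      simp only [← add_assoc, Nat.add_sub_cancel] at ih ⊢
      rw [Finset.sum_Ico_succ_top (by omega : i ≤ i + s)
        (fun p => (a (p + 1) - a p) * (a (p + 2) - a (p + 1)))]
      have h1 : a (i + s) ≤ a (i + s + 1) := hmono (by omega)
      have h2 : a (i + s + 1) ≤ a (i + s + 2) := hmono (by omega)
      have h3 : a i ≤ a (i + s) := hmono (by omega)
      have e : i + s + 1 + 1 = i + s + 2 := by ring
      rw [e]
      nlinarith [mul_nonneg (sub_nonneg.2 h2) (sub_nonneg.2 h3)]

/-- `sq_gap_ge` is strict for increments over at least three positive gaps. -/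
lemma sq_gap_gt {a : ℕ → ℝ} (hmono : Monotone a) (i t : ℕ)
    (h0 : a i < a (i + 1)) (ht : a (i + t + 2) < a (i + t + 3)) :
    ∑ p ∈ Finset.Ico i (i + t + 3), (a (p + 1) - a p) ^ 2
      + 2 * ∑ p ∈ Finset.Ico i (i + t + 2), (a (p + 1) - a p) * (a (p + 2) - a (p + 1))
      < (a (i + t + 3) - a i) ^ 2 := by
  have ih := sq_gap_ge hmono i (t + 2)
  rw [Finset.sum_Ico_succ_top (by omega : i ≤ i + t + 2),
    Finset.sum_Ico_succ_top (by omega : i ≤ i + t + 1)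
      (fun p => (a (p + 1) - a p) * (a (p + 2) - a (p + 1)))]
  simp only [← add_assoc] at ih
  have e0 : i + t + 2 - 1 = i + t + 1 := by omega
  have e1 : i + t + 1 + 1 = i + t + 2 := by ring
  have e2 : i + t + 1 + 2 = i + t + 3 := by ring
  have e3 : i + t + 2 + 1 = i + t + 3 := by ring
  rw [e0] at ih
  rw [e1, e2, e3]
  have h1 : a (i + 1) ≤ a (i + t + 1) := hmono (by omega)
  nlinarith [mul_pos (sub_pos.2 ht) (sub_pos.2 (h0.trans_le h1))]

/-- The contribution of a pair of ranks `i < j` to the lower bound of the energy, with sums over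
the fixed range of gaps. -/
def gapBound (a : ℕ → ℝ) (k i j : ℕ) : ℝ :=
  ∑ p ∈ Finset.range k, (if i ≤ p ∧ p < j then (a (p + 1) - a p) ^ 2 else 0)
    + 2 * ∑ p ∈ Finset.range k,
      (if i ≤ p ∧ p + 1 < j then (a (p + 1) - a p) * (a (p + 2) - a (p + 1)) else 0)

lemma gapBound_eq (a : ℕ → ℝ) {k i j : ℕ} (hj : j ≤ k) :
    gapBound a k i j = ∑ p ∈ Finset.Ico i j, (a (p + 1) - a p) ^ 2
      + 2 * ∑ p ∈ Finset.Ico i (j - 1), (a (p + 1) - a p) * (a (p + 2) - a (p + 1)) := by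
  unfold gapBound
  rw [← Finset.sum_filter, ← Finset.sum_filter]
  congr 2
  · ext p; simp; omega
  · congr 1; ext p; simp; omega

lemma gapBound_le {a : ℕ → ℝ} (hmono : Monotone a) {k i j : ℕ} (hij : i ≤ j) (hj : j ≤ k) :
    gapBound a k i j ≤ (a j - a i) ^ 2 := by
  obtain ⟨t, rfl⟩ := Nat.exists_eq_add_of_le hij
  rw [gapBound_eq a hj]
  exact sq_gap_ge hmono i t

lemma gapBound_lt {a : ℕ → ℝ} (hmono : Monotone a) {k i j : ℕ} (hij : i + 3 ≤ j) (hj : j ≤ k)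
    (hpos : ∀ p, p < k → a p < a (p + 1)) : gapBound a k i j < (a j - a i) ^ 2 := by
  obtain ⟨t, rfl⟩ := Nat.exists_eq_add_of_le hij
  rw [gapBound_eq a hj]
  have e : i + 3 + t = i + t + 3 := by ring
  rw [e] at hj ⊢
  exact sq_gap_gt hmono i t (hpos _ (by omega)) (hpos _ (by omega))

lemma quadForm_rank (G : SimpleGraph V) (r : V → ℕ) (a : ℕ → ℝ) :
    quadForm G (fun v => a (r v)) = ∑ x : V × V,
      if G.Adj x.1 x.2 ∧ r x.1 < r x.2 then (a (r x.2) - a (r x.1)) ^ 2 else 0 := by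
  have h1 : (∑ x : V × V, if G.Adj x.1 x.2 then (a (r x.1) - a (r x.2)) ^ 2 else 0)
      = (∑ x : V × V, if G.Adj x.1 x.2 ∧ r x.1 < r x.2 then (a (r x.2) - a (r x.1)) ^ 2 else 0)
      + ∑ x : V × V, if G.Adj x.2 x.1 ∧ r x.2 < r x.1 then (a (r x.1) - a (r x.2)) ^ 2 else 0 := by
    rw [← Finset.sum_add_distrib]
    refine Finset.sum_congr rfl fun x _ => ?_
    rw [G.adj_comm x.2 x.1]
    by_cases hadj : G.Adj x.1 x.2
    · rcases lt_trichotomy (r x.1) (r x.2) with h | h | h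
      · simp only [hadj, h, h.not_gt, if_true, if_false, and_true, and_false]; ring
      · simp [h]
      · simp only [hadj, h, h.not_gt, if_true, if_false, and_true, and_false]; ring
    · simp [hadj]
  have h2 : (∑ x : V × V, if G.Adj x.2 x.1 ∧ r x.2 < r x.1 then (a (r x.1) - a (r x.2)) ^ 2 else 0)
      = ∑ x : V × V, if G.Adj x.1 x.2 ∧ r x.1 < r x.2 then (a (r x.2) - a (r x.1)) ^ 2 else 0 :=
    Fintype.sum_equiv (Equiv.prodComm V V) _ _ fun x => rfl
  rw [quadForm_eq, ← Fintype.sum_prod_type' (f := fun v w =>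
    if G.Adj v w then (a (r v) - a (r w)) ^ 2 else 0), h1, h2]
  ring

lemma sum_gapBound (G : SimpleGraph V) (r : V → ℕ) (a : ℕ → ℝ) (k : ℕ) :
    (∑ x : V × V, if G.Adj x.1 x.2 ∧ r x.1 < r x.2 then gapBound a k (r x.1) (r x.2) else 0)
      = ∑ p ∈ Finset.range k, (crossOne G r p : ℝ) * (a (p + 1) - a p) ^ 2
        + 2 * ∑ p ∈ Finset.range k,
          (crossTwo G r p : ℝ) * ((a (p + 1) - a p) * (a (p + 2) - a (p + 1))) := by
  have h1 : ∀ p, (crossOne G r p : ℝ) * (a (p + 1) - a p) ^ 2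
      = ∑ x : V × V, if G.Adj x.1 x.2 ∧ r x.1 ≤ p ∧ p < r x.2
          then (a (p + 1) - a p) ^ 2 else 0 := by
    intro p
    rw [← Finset.sum_filter, Finset.sum_const, nsmul_eq_mul, crossOne]
  have h2 : ∀ p, (crossTwo G r p : ℝ) * ((a (p + 1) - a p) * (a (p + 2) - a (p + 1)))
      = ∑ x : V × V, if G.Adj x.1 x.2 ∧ r x.1 ≤ p ∧ p + 1 < r x.2
          then (a (p + 1) - a p) * (a (p + 2) - a (p + 1)) else 0 := by
    intro p
    rw [← Finset.sum_filter, Finset.sum_const, nsmul_eq_mul, crossTwo]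
  simp_rw [h1, h2]
  rw [Finset.sum_comm, Finset.sum_comm (s := Finset.range k), Finset.mul_sum,
    ← Finset.sum_add_distrib]
  refine Finset.sum_congr rfl fun x _ => ?_
  unfold gapBound
  by_cases h : G.Adj x.1 x.2 ∧ r x.1 < r x.2
  · simp only [h.1, true_and, if_pos h.2]
  · rw [if_neg h]
    have e1 : ∀ p, ¬ (G.Adj x.1 x.2 ∧ r x.1 ≤ p ∧ p < r x.2) := fun p hp =>
      h ⟨hp.1, hp.2.1.trans_lt hp.2.2⟩
    have e2 : ∀ p, ¬ (G.Adj x.1 x.2 ∧ r x.1 ≤ p ∧ p + 1 < r x.2) := fun p hp =>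
      h ⟨hp.1, by omega⟩
    simp [e1, e2]

/-- The energy on the comet in terms of the gaps of the value sequence. -/
lemma comet_energy_gaps {n k : ℕ} (hk : 1 ≤ k) (hkn : k + 2 ≤ n) (a : ℕ → ℝ) (ha0 : a 0 = 0)
    (hak : a (k + 1) = a k) :
    quadForm (cometGraph n k) (fun j : Fin n => a (cometRank k j))
      = ∑ p ∈ Finset.range k, (if p = 0 then ((n - k : ℕ) : ℝ) else 2) * (a (p + 1) - a p) ^ 2
        + 2 * ∑ p ∈ Finset.range k, (a (p + 1) - a p) * (a (p + 2) - a (p + 1)) := by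
  rw [comet_energy hk hkn a ha0 hak]
  obtain ⟨l, rfl⟩ : ∃ l, k = l + 1 := ⟨k - 1, by omega⟩
  have h1 : ∑ i ∈ Finset.range (l + 1), (a (i + 2) - a i) ^ 2
      = ∑ i ∈ Finset.range (l + 1), (a (i + 1) - a i) ^ 2
        + ∑ i ∈ Finset.range (l + 1), (a (i + 2) - a (i + 1)) ^ 2
        + 2 * ∑ p ∈ Finset.range (l + 1), (a (p + 1) - a p) * (a (p + 2) - a (p + 1)) := by
    rw [Finset.mul_sum, ← Finset.sum_add_distrib, ← Finset.sum_add_distrib]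
    exact Finset.sum_congr rfl fun i _ => by ring
  have h2 : ∑ i ∈ Finset.range (l + 1), (a (i + 2) - a (i + 1)) ^ 2
      = ∑ i ∈ Finset.range l, (a (i + 2) - a (i + 1)) ^ 2 := by
    rw [Finset.sum_range_succ, hak]; ring
  have e : ((n - (l + 1) : ℕ) : ℝ) = ((n - (l + 1) - 1 : ℕ) : ℝ) + 1 := by
    exact_mod_cast (by omega : n - (l + 1) = n - (l + 1) - 1 + 1)
  rw [h1, h2, Finset.sum_range_succ' _ l,
    Finset.sum_range_succ' (fun p => (if p = 0 then ((n - (l + 1) : ℕ) : ℝ) else 2)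
      * (a (p + 1) - a p) ^ 2) l, e]
  simp only [Nat.add_eq_zero_iff, one_ne_zero, and_false, if_false, if_true, zero_add, ha0,
    sub_zero, ← Finset.mul_sum]
  ring

/-- The energy comparison: a nonnegative function on a tree has at least the energy of its
spiral rearrangement on the comet. If no two values agree, equality forces every edge to join
ranks at distance at most two, and each pair of consecutive gaps to be crossed only once. -/
lemma energy_compare {n k : ℕ} (hk : 1 ≤ k) (hkn : k + 2 ≤ n) {G : SimpleGraph (Fin n)}
    (hG : IsTreeWithBoundary G) (hb : #{v | IsBoundary G v} = n - k) {r : Fin n → ℕ}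
    (hr : IsRanking G k r) {a : ℕ → ℝ} (hmono : Monotone a) (ha0 : a 0 = 0)
    (hak : a (k + 1) = a k) :
    quadForm (cometGraph n k) (fun j : Fin n => a (cometRank k j))
        ≤ quadForm G (fun v => a (r v)) ∧
      (quadForm G (fun v => a (r v))
          ≤ quadForm (cometGraph n k) (fun j : Fin n => a (cometRank k j)) →
        (∀ p, p < k → a p < a (p + 1)) →
        (∀ u v, G.Adj u v → r v ≤ r u + 2) ∧ ∀ p, p + 1 < k → crossTwo G r p = 1) := by
  have hle : ∀ x : Fin n × Fin n,
      (if G.Adj x.1 x.2 ∧ r x.1 < r x.2 then gapBound a k (r x.1) (r x.2) else 0)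
      ≤ if G.Adj x.1 x.2 ∧ r x.1 < r x.2 then (a (r x.2) - a (r x.1)) ^ 2 else 0 := by
    intro x
    split_ifs with h
    · exact gapBound_le hmono h.2.le (hr.le _)
    · exact le_rfl
  have hE := Finset.sum_le_sum fun x (_ : x ∈ Finset.univ) => hle x
  rw [sum_gapBound, ← quadForm_rank] at hE
  have hδ : ∀ p, 0 ≤ a (p + 1) - a p := fun p => sub_nonneg.2 (hmono (Nat.le_succ p))
  have hN : ∀ p ∈ Finset.range k,
      (if p = 0 then ((n - k : ℕ) : ℝ) else 2) * (a (p + 1) - a p) ^ 2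
        ≤ (crossOne G r p : ℝ) * (a (p + 1) - a p) ^ 2 := by
    intro p hp
    refine mul_le_mul_of_nonneg_right ?_ (sq_nonneg _)
    split_ifs with h
    · subst h
      exact_mod_cast hb ▸ crossOne_zero hr hG
    · exact_mod_cast crossOne_ge hr hG (Finset.mem_range.1 hp)
  have hM : ∀ p ∈ Finset.range k, (a (p + 1) - a p) * (a (p + 2) - a (p + 1))
      ≤ (crossTwo G r p : ℝ) * ((a (p + 1) - a p) * (a (p + 2) - a (p + 1))) := by
    intro p hp
    rw [Finset.mem_range] at hp
    rcases Nat.lt_or_ge (p + 1) k with h | h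
    · have h1 : (1 : ℝ) ≤ crossTwo G r p := by exact_mod_cast crossTwo_ge hr hG h
      exact le_mul_of_one_le_left (mul_nonneg (hδ p) (hδ (p + 1))) h1
    · have : p + 1 = k := by omega
      subst this
      rw [hak]; simp
  have hN' := Finset.sum_le_sum hN
  have hM' := Finset.sum_le_sum hM
  rw [comet_energy_gaps hk hkn a ha0 hak]
  refine ⟨by linarith, fun heq hpos => ⟨?_, ?_⟩⟩
  · intro u v huv
    by_contra hc
    have hlt := Finset.sum_lt_sum (fun x (_ : x ∈ Finset.univ) => hle x)
      ⟨(u, v), Finset.mem_univ _, by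
        have : G.Adj u v ∧ r u < r v := ⟨huv, by omega⟩
        rw [if_pos this, if_pos this]
        exact gapBound_lt hmono (show r u + 3 ≤ r v by omega) (hr.le _) hpos⟩
    rw [sum_gapBound, ← quadForm_rank] at hlt
    linarith
  · intro p hp
    by_contra hc
    have h1 := crossTwo_ge hr hG hp
    have h2 : (2 : ℝ) ≤ crossTwo G r p := by exact_mod_cast (by omega : 2 ≤ crossTwo G r p)
    have hlt := Finset.sum_lt_sum hM ⟨p, Finset.mem_range.2 (by omega), by
      have : 0 < (a (p + 1) - a p) * (a (p + 2) - a (p + 1)) :=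
        mul_pos (sub_pos.2 (hpos p (by omega))) (sub_pos.2 (hpos (p + 1) hp))
      nlinarith⟩
    linarith

/-- Sorting the interior vertices by the values of a nonnegative function. The value sequence is
continued by its last value beyond `k`. -/
lemma exists_ranking {G : SimpleGraph V} (hG : IsTreeWithBoundary G) {k : ℕ} (hk : 1 ≤ k)
    (hc : #(interiorFinset G) = k) {f : V → ℝ} (hf0 : ∀ v, 0 ≤ f v) (hf : Vanishes G f) :
    ∃ (r : V → ℕ) (a : ℕ → ℝ), IsRanking G k r ∧ Monotone a ∧ a 0 = 0 ∧ a (k + 1) = a k ∧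
      ∀ v, f v = a (r v) := by
  have e : Fin k ≃ interiorFinset G := ((interiorFinset G).equivFinOfCardEq hc).symm
  set σ : Fin k ≃ interiorFinset G := (Tuple.sort fun i => f (e i)).trans e with hσ
  have hs : Monotone fun i => f (σ i) := Tuple.monotone_sort fun i => f (e i)
  have hmem : ∀ v, v ∈ interiorFinset G ↔ IsInterior G v := fun v => by simp [interiorFinset]
  have hnot : ∀ v, ¬ IsInterior G v ↔ IsBoundary G v := fun v =>
    ⟨fun h => (boundary_or_interior hG v).resolve_right h,
      fun h h' => not_boundary_of_interior h' h⟩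
  set r : V → ℕ := fun v => if h : v ∈ interiorFinset G then (σ.symm ⟨v, h⟩).val + 1 else 0
  set a : ℕ → ℝ := fun i => if i = 0 then 0 else f (σ ⟨min (i - 1) (k - 1), by omega⟩)
  have hr : ∀ v (h : v ∈ interiorFinset G), r v = (σ.symm ⟨v, h⟩).val + 1 := fun v h => dif_pos h
  have hr0 : ∀ v, v ∉ interiorFinset G → r v = 0 := fun v h => dif_neg h
  have ha : ∀ i, i ≠ 0 → a i = f (σ ⟨min (i - 1) (k - 1), by omega⟩) := fun i h => if_neg h
  have ha0 : a 0 = 0 := if_pos rfl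
  refine ⟨r, a, ⟨?_, ?_, ?_, ?_⟩, ?_, ha0, ?_, ?_⟩
  · intro v
    rw [← hnot, ← hmem]
    by_cases h : v ∈ interiorFinset G
    · rw [hr v h]; simp [h]
    · rw [hr0 v h]; simp [h]
  · intro v
    by_cases h : v ∈ interiorFinset G
    · rw [hr v h]; exact (σ.symm ⟨v, h⟩).isLt
    · rw [hr0 v h]; exact Nat.zero_le _
  · intro u v huv hu
    have h1 : u ∈ interiorFinset G := by by_contra h; exact hu (hr0 u h)
    have h2 : v ∈ interiorFinset G := by by_contra h; exact hu (huv.trans (hr0 v h))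
    rw [hr u h1, hr v h2] at huv
    have := σ.symm.injective (Fin.ext (Nat.succ_injective huv))
    exact congrArg Subtype.val this
  · intro i h1 h2
    refine ⟨σ ⟨i - 1, by omega⟩, ?_⟩
    rw [hr _ (σ ⟨i - 1, by omega⟩).2]
    simp only [Subtype.coe_eta, Equiv.symm_apply_apply]
    omega
  · intro i j hij
    rcases Nat.eq_zero_or_pos i with rfl | hi
    · rw [ha0]
      rcases Nat.eq_zero_or_pos j with rfl | hj
      · exact ha0.ge
      · rw [ha j hj.ne']; exact hf0 _
    · rw [ha i hi.ne', ha j (by omega)]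
      exact hs (Fin.mk_le_mk.2 (by omega))
  · rw [ha _ (by omega), ha _ (by omega)]
    congr 4
    simp
  · intro v
    by_cases h : v ∈ interiorFinset G
    · rw [hr v h, ha _ (by omega)]
      have hlt := (σ.symm ⟨v, h⟩).isLt
      have : (⟨min ((σ.symm ⟨v, h⟩).val + 1 - 1) (k - 1), by omega⟩ : Fin k) = σ.symm ⟨v, h⟩ :=
        Fin.ext (by simp only; omega)
      rw [this, Equiv.apply_symm_apply]
    · rw [hr0 v h, ha0]
      exact hf v ((hnot v).1 (by rwa [← hmem]))

lemma ranking_norm {G : SimpleGraph V} {k : ℕ} {r : V → ℕ} (hr : IsRanking G k r) (a : ℕ → ℝ)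
    (ha0 : a 0 = 0) : ∑ v, a (r v) ^ 2 = ∑ i ∈ Finset.Icc 1 k, a i ^ 2 := by
  rw [← Finset.sum_filter_of_ne (p := fun v => r v ≠ 0)]
  · refine Finset.sum_bij (fun v _ => r v) ?_ ?_ ?_ ?_
    · intro v hv
      have := (Finset.mem_filter.1 hv).2
      have := hr.le v
      rw [Finset.mem_Icc]; omega
    · intro u hu v _ h
      exact hr.inj u v h (Finset.mem_filter.1 hu).2
    · intro i hi
      rw [Finset.mem_Icc] at hi
      obtain ⟨v, rfl⟩ := hr.surj i hi.1 hi.2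
      exact ⟨v, Finset.mem_filter.2 ⟨Finset.mem_univ _, by omega⟩, rfl⟩
    · intro v _; rfl
  · intro v _ hv h
    exact hv (by rw [h, ha0]; ring)

/-! ### Recognising the comet -/

lemma sum_degree_tree {n : ℕ} {G : SimpleGraph (Fin n)} (hG : G.IsTree) :
    ∑ v, G.degree v + 2 = 2 * n := by
  have h1 := hG.card_edgeFinset
  have h2 := G.sum_degrees_eq_twice_card_edges
  rw [Fintype.card_fin] at h1
  omega

lemma card_boundary {n k : ℕ} {G : SimpleGraph (Fin n)} (hG : inClassT k G) :
    #{v | IsBoundary G v} = n - k := by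
  have h : (Finset.univ.filter fun v => IsBoundary G v) = (interiorFinset G)ᶜ := by
    ext v
    simp only [interiorFinset, Finset.mem_filter, Finset.mem_univ, true_and, Finset.mem_compl]
    exact ⟨fun h h' => not_boundary_of_interior h' h,
      fun h => (boundary_or_interior hG.1 v).resolve_right h⟩
  rw [h, Finset.card_compl, hG.2, Fintype.card_fin]

lemma min_degree_le {n k : ℕ} {G : SimpleGraph (Fin n)} (hG : inClassT k G) (v : Fin n) :
    (1 + if v ∈ interiorFinset G then 1 else 0) ≤ G.degree v := by
  split_ifs with h
  · exact (Finset.mem_filter.1 h).2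
  · rcases boundary_or_interior hG.1 v with h' | h'
    · exact h'.ge
    · exact absurd (Finset.mem_filter.2 ⟨Finset.mem_univ _, h'⟩) h

lemma sum_min_degree {n k : ℕ} {G : SimpleGraph (Fin n)} (hG : inClassT k G) :
    ∑ v : Fin n, (1 + if v ∈ interiorFinset G then 1 else 0) = n + k := by
  rw [Finset.sum_add_distrib, Finset.sum_ite_mem, Finset.univ_inter]
  simp [hG.2]

lemma add_two_le_of_inClassT {n k : ℕ} {G : SimpleGraph (Fin n)} (hG : inClassT k G) :
    k + 2 ≤ n := by
  have h1 := Finset.sum_le_sum fun v (_ : v ∈ Finset.univ) => min_degree_le hG v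
  rw [sum_min_degree hG] at h1
  have h2 := sum_degree_tree hG.1.1
  omega

lemma degree_le_two {k : ℕ} {G : SimpleGraph (Fin (k + 2))} (hG : inClassT k G)
    (v : Fin (k + 2)) : G.degree v ≤ 2 := by
  have h2 := sum_degree_tree hG.1.1
  have h3 := (Finset.sum_eq_sum_iff_of_le
    fun v (_ : v ∈ Finset.univ) => min_degree_le hG v).1 (by rw [sum_min_degree hG]; omega) v
    (Finset.mem_univ v)
  rw [← h3]
  split_ifs <;> omega

/-- A tree that contains a comet with the same vertices is that comet, as trees are minimal among
connected graphs. -/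
lemma iso_of_hom {n k : ℕ} (hk : 1 ≤ k) (hkn : k + 2 ≤ n) {G : SimpleGraph (Fin n)}
    (hG : G.IsTree) (pos : Fin n ≃ Fin n)
    (h : ∀ i j : Fin n, 1 ≤ j.val → i.val = cometParent k j.val → G.Adj (pos i) (pos j)) :
    Nonempty (G ≃g cometGraph n k) := by
  have e : G.comap pos ≃g G := SimpleGraph.Iso.comap pos G
  have hle : cometGraph n k ≤ G.comap pos := by
    intro i j hij
    rw [SimpleGraph.comap_adj]
    rcases (comet_adj hk i j).1 hij with hh | hh
    · exact h i j hh.1 hh.2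
    · exact (h j i hh.1 hh.2).symm
  have hmin := SimpleGraph.isTree_iff_minimal_connected.1 (e.isTree_iff.2 hG)
  have heq : G.comap pos = cometGraph n k :=
    le_antisymm (hmin.2 (comet_connected hk hkn) hle) hle
  exact ⟨heq ▸ e.symm⟩

lemma exists_parent {W : Type*} {G : SimpleGraph W} (hG : G.Connected) (u : W) {v : W} {d : ℕ}
    (hd : G.dist u v = d + 1) : ∃ w, G.Adj w v ∧ G.dist u w = d := by
  obtain ⟨p, hp⟩ := hG.exists_walk_length_eq_dist v u
  rw [SimpleGraph.dist_comm, hd] at hp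
  cases p with
  | nil => simp at hp
  | @cons _ w _ hadj q =>
    refine ⟨w, hadj.symm, ?_⟩
    rw [SimpleGraph.Walk.length_cons] at hp
    have h1 := SimpleGraph.dist_le q
    have h2 := hG.dist_triangle (u := u) (v := w) (w := v)
    rw [SimpleGraph.dist_eq_one_iff_adj.2 hadj.symm] at h2
    rw [SimpleGraph.dist_comm] at h1
    omega

/-- A tree with `k` interior and two boundary vertices is a path. -/
lemma path_case {k : ℕ} (hk : 1 ≤ k) {G : SimpleGraph (Fin (k + 2))} (hG : inClassT k G) :
    Nonempty (G ≃g cometGraph (k + 2) k) := by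
  obtain ⟨u, hu⟩ := hG.1.2.2
  have hconn := hG.1.1.connected
  have hinj : ∀ d v w, G.dist u v = d → G.dist u w = d → v = w := by
    intro d
    induction d with
    | zero =>
      intro v w hv hw
      rw [hconn.dist_eq_zero_iff] at hv hw
      rw [← hv, ← hw]
    | succ d ih =>
      intro v w hv hw
      obtain ⟨p, hp, hdp⟩ := exists_parent hconn u hv
      obtain ⟨p', hp', hdp'⟩ := exists_parent hconn u hw
      obtain rfl := ih p p' hdp hdp'
      by_contra hvw
      rcases Nat.eq_zero_or_pos d with rfl | hd0
      · rw [hconn.dist_eq_zero_iff] at hdp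
        subst hdp
        have hsub : ({v, w} : Finset (Fin (k + 2))) ⊆ G.neighborFinset u := by
          intro x hx
          simp only [Finset.mem_insert, Finset.mem_singleton] at hx
          rw [SimpleGraph.mem_neighborFinset]
          rcases hx with rfl | rfl <;> assumption
        have := Finset.card_le_card hsub
        rw [Finset.card_pair hvw, SimpleGraph.card_neighborFinset_eq_degree] at this
        unfold IsBoundary at hu
        omega
      · obtain ⟨e, rfl⟩ : ∃ e, d = e + 1 := ⟨d - 1, by omega⟩
        obtain ⟨q, hq, hdq⟩ := exists_parent hconn u hdp
        have hqv : q ≠ v := by rintro rfl; omega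
        have hqw : q ≠ w := by rintro rfl; omega
        have hsub : ({q, v, w} : Finset (Fin (k + 2))) ⊆ G.neighborFinset p := by
          intro x hx
          simp only [Finset.mem_insert, Finset.mem_singleton] at hx
          rw [SimpleGraph.mem_neighborFinset]
          rcases hx with rfl | rfl | rfl
          · exact hq.symm
          · exact hp
          · exact hp'
        have := Finset.card_le_card hsub
        rw [Finset.card_eq_three.2 ⟨q, v, w, hqv, hqw, hvw, rfl⟩,
          SimpleGraph.card_neighborFinset_eq_degree] at this
        have := degree_le_two hG p
        omega
  have hlt : ∀ v, G.dist u v < k + 2 := by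
    intro v
    obtain ⟨p, hp, hl⟩ := hconn.exists_path_of_dist u v
    have := hp.length_lt
    rwa [hl, Fintype.card_fin] at this
  let φ : Fin (k + 2) → Fin (k + 2) := fun v => ⟨G.dist u v, hlt v⟩
  have hφ : Function.Bijective φ :=
    Finite.injective_iff_bijective.1 fun v w h => hinj _ v w rfl (Fin.mk.inj h).symm
  have hpos : ∀ i, G.dist u ((Equiv.ofBijective φ hφ).symm i) = i.val := fun i =>
    congrArg Fin.val ((Equiv.ofBijective φ hφ).apply_symm_apply i)
  refine iso_of_hom hk le_rfl hG.1.1 (Equiv.ofBijective φ hφ).symm fun i j hj hij => ?_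
  have hi : j.val = i.val + 1 := by
    have := j.isLt
    unfold cometParent at hij
    split_ifs at hij <;> omega
  obtain ⟨w, hw, hdw⟩ := exists_parent hconn u ((hpos j).trans hi)
  rw [hinj _ _ _ (hpos i) hdw]
  exact hw

lemma cometRank_spec {k j : ℕ} (h1 : 1 ≤ j) (h2 : j ≤ k) :
    1 ≤ cometRank k j ∧ cometRank k j ≤ k := by
  unfold cometRank
  split_ifs <;> omega

lemma cometRank_inj {k i j : ℕ} (hik : i ≤ k) (hjk : j ≤ k)
    (h : cometRank k i = cometRank k j) : i = j := by
  unfold cometRank at h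
  split_ifs at h <;> omega

lemma cometRank_surj {k m : ℕ} (h1 : 1 ≤ m) (h2 : m ≤ k) :
    ∃ j, 1 ≤ j ∧ j ≤ k ∧ cometRank k j = m := by
  rcases Nat.even_or_odd' m with ⟨c, rfl | rfl⟩
  · exact ⟨c, by omega, by omega, by unfold cometRank; split_ifs <;> omega⟩
  · exact ⟨k - c, by omega, by omega, by unfold cometRank; split_ifs <;> omega⟩

/-- The vertices of a ranked tree can be placed on the comet according to their ranks, with a
prescribed boundary vertex at the position `0`. -/
lemma exists_positions {n k : ℕ} (hkn : k + 2 ≤ n) {G : SimpleGraph (Fin n)} {r : Fin n → ℕ}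
    (hr : IsRanking G k r) {l : Fin n} (hl : r l = 0) :
    ∃ pos : Fin n ≃ Fin n, (∀ j, r (pos j) = cometRank k j) ∧
      ∀ j : Fin n, j.val = 0 → pos j = l := by
  have hex : ∀ i : Fin (k + 1), ∃ v, r v = cometRank k i ∧ (i.val = 0 → v = l) := by
    intro i
    rcases Nat.eq_zero_or_pos i.val with h | h
    · exact ⟨l, by rw [hl, h]; simp [cometRank], fun _ => rfl⟩
    · obtain ⟨h1, h2⟩ := cometRank_spec h (Nat.lt_succ_iff.1 i.isLt)
      obtain ⟨v, hv⟩ := hr.surj _ h1 h2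
      exact ⟨v, hv, fun h' => by omega⟩
  choose g hg hgl using hex
  have hgi : Function.Injective g := by
    intro i j hij
    have h : cometRank k i = cometRank k j := by rw [← hg, ← hg, hij]
    exact Fin.ext (cometRank_inj (Nat.lt_succ_iff.1 i.isLt) (Nat.lt_succ_iff.1 j.isLt) h)
  obtain ⟨pos, hpos⟩ := Equiv.Perm.exists_extending_pair
    (fun i : Fin (k + 1) => (⟨i.val, by omega⟩ : Fin n)) g
    (fun i j h => Fin.ext (Fin.mk.inj h)) hgi
  have hsmall : ∀ j : Fin n, ∀ h : j.val < k + 1, pos j = g ⟨j.val, h⟩ := fun j h => hpos ⟨j.val, h⟩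
  refine ⟨pos, fun j => ?_, fun j hj => ?_⟩
  · rcases Nat.lt_or_ge j.val (k + 1) with h | h
    · rw [hsmall j h, hg]
    · have h0 : cometRank k j = 0 := if_pos h
      rw [h0]
      by_contra hne
      obtain ⟨i, hi1, hik, hi⟩ := cometRank_surj (Nat.one_le_iff_ne_zero.2 hne) (hr.le (pos j))
      have : pos j = pos ⟨i, by omega⟩ := by
        refine hr.inj _ _ ?_ hne
        rw [hsmall ⟨i, by omega⟩ (Nat.lt_succ_of_le hik), hg]
        exact hi.symm
      have := congrArg Fin.val (pos.injective this)
      simp only at this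
      omega
  · rw [hsmall j (by omega)]
    exact hgl _ hj

/-- A ranked tree in which every edge joins ranks at distance at most two, and every pair of
consecutive gaps is crossed by exactly one edge, is a comet: these conditions determine all edges
joining the ranks `p` and `p + 2` and the edge joining the two highest ranks, and leave a single
boundary vertex that is not adjacent to the vertex of rank `1`. -/
lemma iso_of_ranking {n k : ℕ} (hk : 1 ≤ k) (hkn : k + 2 ≤ n) {G : SimpleGraph (Fin n)}
    (hG : IsTreeWithBoundary G) {r : Fin n → ℕ} (hr : IsRanking G k r)
    (hgap : ∀ u v, G.Adj u v → r v ≤ r u + 2)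
    (hcross : ∀ p, p + 1 < k → crossTwo G r p = 1) : Nonempty (G ≃g cometGraph n k) := by
  have hedge : ∀ p, p + 1 < k → ∃ x y, G.Adj x y ∧ r x = p ∧ r y = p + 2 := by
    intro p hp
    have h1 : 0 < crossTwo G r p := by rw [hcross p hp]; exact one_pos
    obtain ⟨⟨x, y⟩, hxy⟩ := Finset.card_pos.1 h1
    simp only [Finset.mem_filter, Finset.mem_univ, true_and] at hxy
    have := hgap x y hxy.1
    exact ⟨x, y, hxy.1, by omega, by omega⟩
  have hskip : ∀ p u w, 1 ≤ p → r u = p → r w = p + 2 → G.Adj u w := by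
    intro p u w hp hu hw
    have := hr.le w
    obtain ⟨x, y, hxy, hx, hy⟩ := hedge p (by omega)
    rwa [hr.inj u x (by omega) (by omega), hr.inj w y (by omega) (by omega)]
  have htop : ∀ u w, 2 ≤ k → r u = k - 1 → r w = k → G.Adj u w := by
    intro u w hk2 hu hw
    have h1 := crossOne_ge hr hG (p := k - 1) (by omega)
    have h2 := hcross (k - 2) (by omega)
    have h3 : crossTwo G r (k - 2) < crossOne G r (k - 1) := by omega
    obtain ⟨⟨x, y⟩, hxy, hn⟩ := Finset.exists_mem_notMem_of_card_lt_card h3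
    simp only [Finset.mem_filter, Finset.mem_univ, true_and] at hxy hn
    have hy := hr.le y
    have hx : ¬ r x ≤ k - 2 := fun h => hn ⟨hxy.1, h, by omega⟩
    rw [hr.inj u x (by omega) (by omega), hr.inj w y (by omega) (by omega)]
    exact hxy.1
  obtain ⟨l, hl, hl2⟩ : ∃ l, r l = 0 ∧ (2 ≤ k → ∃ y, G.Adj l y ∧ r y = 2) := by
    rcases Nat.lt_or_ge k 2 with h | h
    · obtain ⟨l, hl⟩ := hG.2.2
      exact ⟨l, (hr.zero_iff l).2 hl, fun h' => by omega⟩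
    · obtain ⟨x, y, hxy, hx, hy⟩ := hedge 0 (by omega)
      exact ⟨x, hx, fun _ => ⟨y, hxy, by omega⟩⟩
  have hleaf : ∀ v w, r v = 0 → r w = 1 → (k = 1 ∨ v ≠ l) → G.Adj v w := by
    intro v w hv hw hor
    have hb := (hr.zero_iff v).1 hv
    obtain ⟨y, hy⟩ := (G.degree_pos_iff_exists_adj v).1
      (by rw [show G.degree v = 1 from hb]; exact one_pos)
    have h1 : r y ≠ 0 := fun h =>
      not_boundary_of_interior (interior_of_adj_boundary hG hb hy) ((hr.zero_iff y).1 h)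
    have h2 := hgap v y hy
    have h3 := hr.le y
    have h4 : r y ≠ 2 := by
      intro h
      obtain ⟨z, hz, hz2⟩ := hl2 (by omega)
      have hc : #{x : Fin n × Fin n | G.Adj x.1 x.2 ∧ r x.1 ≤ 0 ∧ 0 + 1 < r x.2} ≤ 1 :=
        (hcross 0 (by omega)).le
      have := Finset.card_le_one.1 hc (v, y) (by simp [hy, hv, h]) (l, z) (by simp [hz, hl, hz2])
      have hvl : v = l := congrArg Prod.fst this
      rcases hor with h | h
      · omega
      · exact h hvl
    rwa [hr.inj w y (by omega) (by omega)]
  obtain ⟨pos, hpos, hpos0⟩ := exists_positions hkn hr hl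
  refine iso_of_hom hk hkn hG.1 pos fun i j hj hij => ?_
  have hri := hpos i
  have hrj := hpos j
  unfold cometParent at hij
  rcases Nat.lt_or_ge k j.val with hjk | hjk
  · rw [if_neg (by omega)] at hij
    rw [hij] at hri
    refine (hleaf _ _ (hrj.trans (if_pos hjk)) (hri.trans ?_) (Or.inr fun h => ?_)).symm
    · unfold cometRank; split_ifs <;> omega
    · rw [← hpos0 ⟨0, by omega⟩ rfl] at h
      have := congrArg Fin.val (pos.injective h)
      simp only at this
      omega
  · rw [if_pos hjk] at hij
    rw [hij] at hri
    unfold cometRank at hri hrj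
    rcases Nat.eq_or_lt_of_le hj with h1 | h1
    · have hi0 := hpos0 i (by omega)
      rcases Nat.eq_or_lt_of_le hk with h2 | h2
      · refine hleaf _ _ (by rw [hi0]; exact hl) (hrj.trans ?_) (Or.inl h2.symm)
        split_ifs <;> omega
      · obtain ⟨y, hy, hy2⟩ := hl2 h2
        have : r (pos j) = 2 := by rw [hrj]; split_ifs <;> omega
        rw [hi0, hr.inj (pos j) y (by omega) (by omega)]
        exact hy
    · rcases Nat.lt_or_ge k (2 * j.val) with h2 | h2
      · rcases Nat.lt_or_ge (k + 2) (2 * j.val) with h3 | h3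
        · refine (hskip (r (pos j)) _ _ ?_ rfl ?_).symm
          · rw [hrj]; split_ifs <;> omega
          · rw [hri, hrj]; split_ifs <;> omega
        · rcases Nat.eq_or_lt_of_le h3 with h4 | h4
          · refine (htop _ _ (by omega) ?_ ?_).symm
            · rw [hrj]; split_ifs <;> omega
            · rw [hri]; split_ifs <;> omega
          · refine htop _ _ (by omega) ?_ ?_
            · rw [hri]; split_ifs <;> omega
            · rw [hrj]; split_ifs <;> omega
      · refine hskip (r (pos i)) _ _ ?_ rfl ?_
        · rw [hri]; split_ifs <;> omega
        · rw [hri, hrj]; split_ifs <;> omega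

/-! ### Comparison with the comet -/

/-- The comet minimises the first Dirichlet eigenvalue in its class, and it is the only
minimiser. -/
lemma comet_compare {n k : ℕ} (hk : 1 ≤ k) {G : SimpleGraph (Fin n)} (hG : inClassT k G) :
    dirichletLambda (cometGraph n k) ≤ dirichletLambda G ∧
      (dirichletLambda G ≤ dirichletLambda (cometGraph n k) →
        Nonempty (G ≃g cometGraph n k)) := by
  have hkn := add_two_le_of_inClassT hG
  obtain ⟨f, hf0, hfv, hf1, hfQ, -⟩ := exists_ground G hG.1.2.1 (boundary_or_interior hG.1)
  have hC := comet_inClassT hk hkn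
  obtain ⟨-, -, -, -, -, hmin⟩ :=
    exists_ground (cometGraph n k) hC.1.2.1 (boundary_or_interior hC.1)
  obtain ⟨r, a, hr, hmono, ha0, hak, hfa⟩ := exists_ranking hG.1 hk hG.2 hf0 hfv
  obtain rfl : f = fun v => a (r v) := funext hfa
  obtain ⟨hle, heq⟩ := energy_compare hk hkn hG.1 (card_boundary hG) hr hmono ha0 hak
  have hsum : ∑ i ∈ Finset.Icc 1 k, a i ^ 2 = 1 := by rw [← ranking_norm hr a ha0]; exact hf1
  have hnorm : ∑ j : Fin n, a (cometRank k j) ^ 2 = 1 := by rw [comet_norm hkn a ha0, hsum]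
  have hgv : Vanishes (cometGraph n k) (fun j : Fin n => a (cometRank k j)) := by
    intro j hj
    have : cometRank k j = 0 := by
      unfold cometRank
      rcases (comet_boundary_iff hk hkn j).1 hj with h | h <;> split_ifs <;> omega
    simp only [this, ha0]
  have hg := hmin _ hgv
  rw [hnorm, mul_one] at hg
  refine ⟨by linarith, fun hG' => ?_⟩
  rcases Nat.eq_or_lt_of_le hkn with rfl | hkn3
  · exact path_case hk hG
  have hQ : quadForm (cometGraph n k) (fun j : Fin n => a (cometRank k j))
      = dirichletLambda (cometGraph n k) * ∑ j : Fin n, a (cometRank k j) ^ 2 := by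
    rw [hnorm]; linarith
  have hgaps := comet_gaps hk hkn3 hmono ha0 hak
    (by
      by_contra! hc
      rw [Finset.sum_eq_zero fun i hi => by
        rw [hc i (Finset.mem_Icc.1 hi).2]; norm_num] at hsum
      exact zero_ne_one hsum)
    (fun v hv => eigen_of_min (cometGraph n k) hmin hgv hQ v fun h =>
      not_boundary_of_interior hv h)
  obtain ⟨h1, h2⟩ := heq (by linarith) hgaps
  exact iso_of_ranking hk hkn hG.1 hr h1 h2

end Helpers

/-- **Theorem 1 (Klobürsteltheorem).** A tree `G` has the Faber-Krahn property
in the class `T^(n,k)` if and only if `G` is a comet; `G` is then uniquely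
determined up to isomorphism. -/
theorem faberKrahn_comet (n k : ℕ) (hk1 : 1 ≤ k) (hkn : k + 1 ≤ n)
    (G : SimpleGraph (Fin n)) (hG : inClassT k G) :
    (∀ G' : SimpleGraph (Fin n), inClassT k G' →
        dirichletLambda G ≤ dirichletLambda G')
      ↔ Nonempty (G ≃g cometGraph n k) := by
  have hkn2 := add_two_le_of_inClassT hG
  constructor
  · intro h
    exact (comet_compare hk1 hG).2 (h _ (comet_inClassT hk1 hkn2))
  · rintro ⟨e⟩ G' hG'
    rw [dirichletLambda_iso e]
    exact (comet_compare hk1 hG').1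

end FK
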